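/- arXiv:1509.05246 — 6 statements merged into one kernel-verified Lean document; each statement's English description precedes it below -/
import Mathlib

section
/- Let (X,Σ,μ,T) be an ergodic measure-preserving ℤ^d-system and f ∈ L²(X,μ). The following are equivalent: (1) (X,T) is μ-f-mean sensitive; (2) (X,T) is μ-f-mean expansive; (3) there exists ε > 0 such that for μ-almost every x, μ(B_ε^f(x)) = 0, where B_ε^f(x) := {y : d_f(x,y) ≤ ε}. -/
open MeasureTheory Filter Finset Metric
open scoped Classical

noncomputable section

/-- The box `{0,…,n−1}^d` inside `ℤ^d`. -/
def Fbox (d n : ℕ) : Finset (Fin d → ℤ) :=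
  Fintype.piFinset fun _ => Finset.Icc (0 : ℤ) ((n : ℤ) - 1)

/-- Upper density of a subset of `ℤ^d` along the boxes `F_n`. -/
def upperDensity (d : ℕ) (S : Set (Fin d → ℤ)) : ℝ :=
  Filter.limsup
    (fun n : ℕ => (((Fbox d n).filter (fun j => j ∈ S)).card : ℝ) / ((Fbox d n).card : ℝ))
    Filter.atTop

/-- Lower density of a subset of `ℤ^d` along the boxes `F_n`. -/
def lowerDensity (d : ℕ) (S : Set (Fin d → ℤ)) : ℝ :=
  Filter.liminf
    (fun n : ℕ => (((Fbox d n).filter (fun j => j ∈ S)).card : ℝ) / ((Fbox d n).card : ℝ))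
    Filter.atTop

variable {X : Type*}

/-- The pseudometric `d_f(x,y) = limsup_n ((1/|F_n|) Σ_{j∈F_n} |f(T^j x) − f(T^j y)|²)^{1/2}`. -/
def dF {d : ℕ} (T : (Fin d → ℤ) → X → X) (f : X → ℂ) (x y : X) : ℝ :=
  Filter.limsup (fun n : ℕ =>
    Real.sqrt ((∑ j ∈ Fbox d n, ‖f (T j x) - f (T j y)‖ ^ 2) / ((Fbox d n).card : ℝ)))
    Filter.atTop

/-- `x` is a generic point for `|f|²`:
the Birkhoff averages of `|f|²` along `x` converge to `∫ |f|² dμ`. -/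
def genericSq {d : ℕ} [MeasurableSpace X] (μ : Measure X) (T : (Fin d → ℤ) → X → X)
    (f : X → ℂ) (x : X) : Prop :=
  Filter.Tendsto
    (fun n : ℕ => (∑ j ∈ Fbox d n, ‖f (T j x)‖ ^ 2) / ((Fbox d n).card : ℝ))
    Filter.atTop (nhds (∫ y, ‖f y‖ ^ 2 ∂μ))

/-- `ε` is a `μ`-sensitivity constant for `f`: every positive measure set contains two
generic points `x, y` with `d_f(x,y) > ε`. -/
def SensitivityConstant {d : ℕ} [MeasurableSpace X] (μ : Measure X)
    (T : (Fin d → ℤ) → X → X) (f : X → ℂ) (ε : ℝ) : Prop :=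
  0 < ε ∧ ∀ A : Set X, MeasurableSet A → 0 < μ A →
    ∃ x ∈ A, ∃ y ∈ A, genericSq μ T f x ∧ genericSq μ T f y ∧ ε < dF T f x y

/-- `f` is `μ`-mean sensitive (`f ∈ H_ms`). -/
def MeanSensitiveFun {d : ℕ} [MeasurableSpace X] (μ : Measure X)
    (T : (Fin d → ℤ) → X → X) (f : X → ℂ) : Prop :=
  ∃ ε : ℝ, SensitivityConstant μ T f ε

/-- `f` is `μ`-mean expansive: for some `ε > 0`, `μ×μ {(x,y) : d_f(x,y) > ε} = 1`. -/
def MeanExpansiveFun {d : ℕ} [MeasurableSpace X] (μ : Measure X)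
    (T : (Fin d → ℤ) → X → X) (f : X → ℂ) : Prop :=
  ∃ ε : ℝ, 0 < ε ∧ (μ.prod μ) {p : X × X | ε < dF T f p.1 p.2} = 1


section helpers

lemma Fbox_mem {d n : ℕ} {v : Fin d → ℤ} : v ∈ Fbox d n ↔ ∀ k, 0 ≤ v k ∧ v k < n := by
  simp only [Fbox, Fintype.mem_piFinset, Finset.mem_Icc]
  refine forall_congr' fun k => ?_
  constructor <;> intro h <;> constructor <;> omega

lemma Fbox_card (d n : ℕ) : (Fbox d n).card = n ^ d := by
  simp [Fbox, Fintype.card_piFinset]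

lemma comb_max {d : ℕ} (a : (Fin d → ℤ) → ENNReal) (L : ENNReal) (N M : ℕ)
    (J : Finset (Fin d → ℤ)) (hJ : J ⊆ Fbox d M)
    (h : ∀ j ∈ J, ∃ n : ℕ, 1 ≤ n ∧ n ≤ N ∧
      L * ((n ^ d : ℕ) : ENNReal) ≤ ∑ i ∈ Fbox d n, a (i + j)) :
    L * (J.card : ENNReal) ≤ 3 ^ d * ∑ i ∈ Fbox d (M + N), a i := by
  choose! n hn1 hnN hn using h
  set C : (Fin d → ℤ) → Finset (Fin d → ℤ) := fun j => (Fbox d (n j)).image (fun v => v + j)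
    with hC
  obtain ⟨u, huJ, hdisj, hcov⟩ := Vitali.exists_disjoint_subfamily_covering_enlargement
    (fun j => (C j : Set (Fin d → ℤ))) (J : Set (Fin d → ℤ)) (fun j => (n j : ℝ)) 2 (by norm_num)
    (fun a _ => by positivity) (N : ℝ) (fun a ha => by exact_mod_cast hnN a ha)
    (fun a ha => by
      refine ⟨a, ?_⟩
      simp only [hC, Finset.coe_image, Set.mem_image, Finset.mem_coe]
      refine ⟨0, ?_, by simp⟩
      rw [Fbox_mem]
      intro k
      have := hn1 a ha
      simp; omega)
  set U : Finset (Fin d → ℤ) := J.filter (fun j => j ∈ u) with hU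
  have hUu : ∀ b, b ∈ u ↔ b ∈ U := fun b => by
    simp only [hU, Finset.mem_filter]
    exact ⟨fun hb => ⟨huJ hb, hb⟩, fun hb => hb.2⟩
  have hsub : J ⊆ U.biUnion (fun b => (Fbox d (3 * n b)).image
      (fun v => v + b - (fun _ => 2 * (n b : ℤ)))) := by
    intro j hj
    obtain ⟨b, hb, ⟨p, hp1, hp2⟩, hle⟩ := hcov j hj
    simp only [hC, Finset.coe_image, Set.mem_image, Finset.mem_coe] at hp1 hp2
    obtain ⟨v, hv, rfl⟩ := hp1
    obtain ⟨w, hw, hwv⟩ := hp2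
    have hle' : n j ≤ 2 * n b := by exact_mod_cast hle
    rw [Finset.mem_biUnion]
    refine ⟨b, (hUu b).1 hb, ?_⟩
    rw [Finset.mem_image]
    refine ⟨j - b + (fun _ => 2 * (n b : ℤ)), ?_, by abel⟩
    rw [Fbox_mem] at *
    intro k
    have h1 := hv k
    have h2 := hw k
    have h3 := congrFun hwv k
    simp only [Pi.add_apply, Pi.sub_apply] at *
    push_cast
    omega
  have hcard : J.card ≤ ∑ b ∈ U, 3 ^ d * (n b) ^ d := by
    refine (Finset.card_le_card hsub).trans (Finset.card_biUnion_le.trans ?_)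
    refine Finset.sum_le_sum fun b _ => ?_
    refine Finset.card_image_le.trans ?_
    rw [Fbox_card, mul_pow]
  have hUdisj : (U : Set (Fin d → ℤ)).PairwiseDisjoint C := by
    intro x hx y hy hxy
    have := hdisj ((hUu x).2 hx) ((hUu y).2 hy) hxy
    simpa [Function.onFun] using this
  have hUsub : U.biUnion C ⊆ Fbox d (M + N) := by
    intro p hp
    rw [Finset.mem_biUnion] at hp
    obtain ⟨b, hb, hp⟩ := hp
    simp only [hC, Finset.mem_image] at hp
    obtain ⟨v, hv, rfl⟩ := hp
    have hbJ : b ∈ J := (Finset.mem_filter.1 hb).1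
    have hbM := hJ hbJ
    have := hnN b hbJ
    rw [Fbox_mem] at *
    intro k
    have h1 := hv k
    have h2 := hbM k
    simp only [Pi.add_apply]
    push_cast
    omega
  calc L * (J.card : ENNReal) ≤ L * ((∑ b ∈ U, 3 ^ d * (n b) ^ d : ℕ) : ENNReal) := by
        gcongr
    _ = 3 ^ d * ∑ b ∈ U, L * (((n b) ^ d : ℕ) : ENNReal) := by
        push_cast
        rw [Finset.mul_sum, Finset.mul_sum]
        refine Finset.sum_congr rfl fun b _ => by ring
    _ ≤ 3 ^ d * ∑ b ∈ U, ∑ i ∈ C b, a i := by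
        gcongr with b hb
        refine (hn b (Finset.mem_filter.1 hb).1).trans (le_of_eq ?_)
        rw [hC, Finset.sum_image]
        intro x _ y _ hxy
        exact add_right_cancel hxy
    _ = 3 ^ d * ∑ i ∈ U.biUnion C, a i := by
        rw [Finset.sum_biUnion hUdisj]
    _ ≤ _ := by
        gcongr

lemma tendsto_ratio (d N : ℕ) :
    Tendsto (fun M : ℕ => (((M + N : ℕ) : ℝ) / M) ^ d) atTop (nhds 1) := by
  have : Tendsto (fun M : ℕ => (((M + N : ℕ) : ℝ) / M)) atTop (nhds 1) := by
    have h : Tendsto (fun M : ℕ => 1 + (N : ℝ) / M) atTop (nhds (1 + 0)) :=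
      tendsto_const_nhds.add (tendsto_const_div_atTop_nhds_zero_nat _)
    rw [add_zero] at h
    refine h.congr' ?_
    filter_upwards [eventually_gt_atTop 0] with M hM
    have : (M : ℝ) ≠ 0 := by positivity
    push_cast
    field_simp
    try ring
  simpa using this.pow d

lemma maximal_fin {d : ℕ} [MeasurableSpace X] (μ : Measure X) [IsProbabilityMeasure μ]
    (T : (Fin d → ℤ) → X → X) (hT : ∀ j, MeasurePreserving (T j) μ μ)
    (hTadd : ∀ i j, T (i + j) = T i ∘ T j) (G : X → ENNReal) (hG : Measurable G)
    (hGi : ∫⁻ x, G x ∂μ ≠ ⊤)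
    (L : ENNReal) (hL : L ≠ ⊤) (N : ℕ) :
    L * μ {x | ∃ n : ℕ, 1 ≤ n ∧ n ≤ N ∧ L * ((n ^ d : ℕ) : ENNReal) ≤ ∑ i ∈ Fbox d n, G (T i x)}
      ≤ 3 ^ d * ∫⁻ x, G x ∂μ := by
  set E := {x | ∃ n : ℕ, 1 ≤ n ∧ n ≤ N ∧
    L * ((n ^ d : ℕ) : ENNReal) ≤ ∑ i ∈ Fbox d n, G (T i x)} with hE
  have hEm : MeasurableSet E := by
    have : E = ⋃ n : ℕ, ⋃ (_ : 1 ≤ n), ⋃ (_ : n ≤ N),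
        {x | L * ((n ^ d : ℕ) : ENNReal) ≤ ∑ i ∈ Fbox d n, G (T i x)} := by
      ext x
      simp only [hE, Set.mem_ofPred_eq, Set.mem_iUnion, exists_prop]
    rw [this]
    refine MeasurableSet.iUnion fun n => MeasurableSet.iUnion fun _ => MeasurableSet.iUnion fun _ => ?_
    refine measurableSet_le measurable_const ?_
    exact Finset.measurable_sum _ fun i _ => hG.comp (hT i).measurable
  have key : ∀ M : ℕ, (L * μ E) * ((M ^ d : ℕ) : ENNReal) ≤
      (3 ^ d * ∫⁻ x, G x ∂μ) * (((M + N) ^ d : ℕ) : ENNReal) := by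
    intro M
    have hpt : ∀ x, L * ∑ j ∈ Fbox d M, E.indicator (fun _ => (1 : ENNReal)) (T j x) ≤
        3 ^ d * ∑ i ∈ Fbox d (M + N), G (T i x) := by
      intro x
      have := comb_max (fun i => G (T i x)) L N M ((Fbox d M).filter (fun j => T j x ∈ E))
        (Finset.filter_subset _ _) (by
          intro j hj
          obtain ⟨n, h1, h2, h3⟩ := (Finset.mem_filter.1 hj).2
          refine ⟨n, h1, h2, h3.trans (le_of_eq ?_)⟩
          refine Finset.sum_congr rfl fun i _ => ?_
          rw [hTadd]; rfl)
      refine le_trans (le_of_eq ?_) this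
      congr 1
      simp only [Set.indicator_apply]
      rw [Finset.sum_boole]
    have h2 := lintegral_mono (μ := μ) hpt
    rw [lintegral_const_mul, lintegral_const_mul, lintegral_finsetSum, lintegral_finsetSum] at h2
    · have e1 : ∀ j, ∫⁻ x, E.indicator (fun _ => (1 : ENNReal)) (T j x) ∂μ = μ E := by
        intro j
        rw [(hT j).lintegral_comp (f := E.indicator (fun _ => (1 : ENNReal)))
          (measurable_const.indicator hEm), lintegral_indicator hEm]
        simp
      have e2 : ∀ j, ∫⁻ x, G (T j x) ∂μ = ∫⁻ x, G x ∂μ := fun j => (hT j).lintegral_comp hG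
      simp only [e1, e2, Finset.sum_const, Fbox_card, nsmul_eq_mul] at h2
      calc _ = L * (((M ^ d : ℕ) : ENNReal) * μ E) := by ring
        _ ≤ _ := h2
        _ = _ := by ring
    · exact fun i _ => hG.comp (hT i).measurable
    · exact fun i _ => (measurable_const.indicator hEm).comp (hT i).measurable
    · exact Finset.measurable_sum _ fun i _ => hG.comp (hT i).measurable
    · exact Finset.measurable_sum _ fun i _ =>
        (measurable_const.indicator hEm).comp (hT i).measurable
  have hA : L * μ E ≠ ⊤ := ENNReal.mul_ne_top hL (measure_ne_top _ _)
  have hB : 3 ^ d * ∫⁻ x, G x ∂μ ≠ ⊤ := ENNReal.mul_ne_top (by simp) hGi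
  generalize hAA : L * μ E = A at *
  generalize hBB : 3 ^ d * ∫⁻ x, G x ∂μ = B at *
  lift A to NNReal using hA
  lift B to NNReal using hB
  have key' : ∀ M : ℕ, (A : ℝ) * (M : ℝ) ^ d ≤ B * ((M + N : ℕ) : ℝ) ^ d := by
    intro M
    have := key M
    exact_mod_cast this
  have : (A : ℝ) ≤ B * 1 := by
    refine ge_of_tendsto ((tendsto_ratio d N).const_mul (B : ℝ)) ?_
    filter_upwards [eventually_gt_atTop 0] with M hM
    have hM' : (0 : ℝ) < (M : ℝ) ^ d := by positivity
    rw [div_pow, ← mul_div_assoc, le_div_iff₀ hM']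
    exact key' M
  rw [mul_one] at this
  exact_mod_cast this

lemma maximal_all {d : ℕ} [MeasurableSpace X] (μ : Measure X) [IsProbabilityMeasure μ]
    (T : (Fin d → ℤ) → X → X) (hT : ∀ j, MeasurePreserving (T j) μ μ)
    (hTadd : ∀ i j, T (i + j) = T i ∘ T j) (G : X → ENNReal) (hG : AEMeasurable G μ)
    (hGi : ∫⁻ x, G x ∂μ ≠ ⊤)
    (L : ENNReal) (hL : L ≠ ⊤) :
    L * μ {x | ∃ n : ℕ, 1 ≤ n ∧ L * ((n ^ d : ℕ) : ENNReal) ≤ ∑ i ∈ Fbox d n, G (T i x)}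
      ≤ 3 ^ d * ∫⁻ x, G x ∂μ := by
  have hae : ∀ᵐ x ∂μ, ∀ j, G (T j x) = hG.mk G (T j x) := by
    rw [ae_all_iff]
    exact fun j => (hT j).quasiMeasurePreserving.ae_eq_comp hG.ae_eq_mk
  have e1 : ∫⁻ x, G x ∂μ = ∫⁻ x, hG.mk G x ∂μ := lintegral_congr_ae hG.ae_eq_mk
  have e2 : μ {x | ∃ n : ℕ, 1 ≤ n ∧ L * ((n ^ d : ℕ) : ENNReal) ≤ ∑ i ∈ Fbox d n, G (T i x)}
      = μ {x | ∃ n : ℕ, 1 ≤ n ∧ L * ((n ^ d : ℕ) : ENNReal) ≤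
        ∑ i ∈ Fbox d n, hG.mk G (T i x)} := by
    refine measure_congr ?_
    filter_upwards [hae] with x hx
    simp only [eq_iff_iff]
    change (∃ n : ℕ, _ ∧ _) ↔ (∃ n : ℕ, _ ∧ _)
    simp only [hx]
  rw [e2, e1]
  rw [e1] at hGi
  have e3 : {x | ∃ n : ℕ, 1 ≤ n ∧ L * ((n ^ d : ℕ) : ENNReal) ≤
        ∑ i ∈ Fbox d n, hG.mk G (T i x)} = ⋃ N : ℕ, {x | ∃ n : ℕ, 1 ≤ n ∧ n ≤ N ∧
        L * ((n ^ d : ℕ) : ENNReal) ≤ ∑ i ∈ Fbox d n, hG.mk G (T i x)} := by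
    ext x
    simp only [Set.mem_ofPred_eq, Set.mem_iUnion]
    constructor
    · rintro ⟨n, h1, h2⟩
      exact ⟨n, n, h1, le_rfl, h2⟩
    · rintro ⟨N, n, h1, _, h2⟩
      exact ⟨n, h1, h2⟩
  rw [e3, Monotone.measure_iUnion, ENNReal.mul_iSup]
  · exact iSup_le fun N => maximal_fin μ T hT hTadd _ hG.measurable_mk hGi L hL N
  · rintro N N' hN x ⟨n, h1, h2, h3⟩
    exact ⟨n, h1, h2.trans hN, h3⟩

/-- Almost everywhere convergence of the box averages. -/
def PErg {d : ℕ} [MeasurableSpace X] (μ : Measure X) (T : (Fin d → ℤ) → X → X) (g : X → ℝ) : Prop :=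
  ∀ᵐ x ∂μ, Tendsto (fun n : ℕ => (∑ j ∈ Fbox d n, g (T j x)) / ((Fbox d n).card : ℝ)) atTop
    (nhds (∫ y, g y ∂μ))

lemma PErg_congr {d : ℕ} [MeasurableSpace X] {μ : Measure X}
    {T : (Fin d → ℤ) → X → X} (hT : ∀ j, MeasurePreserving (T j) μ μ) {g h : X → ℝ}
    (hgh : g =ᵐ[μ] h) (hg : PErg μ T g) : PErg μ T h := by
  have hae : ∀ᵐ x ∂μ, ∀ j, g (T j x) = h (T j x) := by
    rw [ae_all_iff]
    exact fun j => (hT j).quasiMeasurePreserving.ae_eq_comp hgh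
  unfold PErg at *
  rw [← integral_congr_ae hgh]
  filter_upwards [hae, hg] with x h1 h2
  simpa only [h1] using h2

lemma PErg_add {d : ℕ} [MeasurableSpace X] {μ : Measure X}
    {T : (Fin d → ℤ) → X → X} {g h : X → ℝ} (hgi : Integrable g μ) (hhi : Integrable h μ)
    (hg : PErg μ T g) (hh : PErg μ T h) : PErg μ T (g + h) := by
  unfold PErg at *
  simp only [Pi.add_apply]
  rw [integral_add hgi hhi]
  filter_upwards [hg, hh] with x h1 h2
  simpa only [Finset.sum_add_distrib, add_div] using h1.add h2

lemma PErg_smul {d : ℕ} [MeasurableSpace X] {μ : Measure X}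
    {T : (Fin d → ℤ) → X → X} {g : X → ℝ} (c : ℝ)
    (hg : PErg μ T g) : PErg μ T (c • g) := by
  unfold PErg at *
  simp only [Pi.smul_apply, smul_eq_mul]
  rw [integral_const_mul]
  filter_upwards [hg] with x h1
  simpa only [← Finset.mul_sum, mul_div_assoc] using h1.const_mul c

lemma PErg_const {d : ℕ} [MeasurableSpace X] {μ : Measure X} [IsProbabilityMeasure μ]
    {T : (Fin d → ℤ) → X → X} (c : ℝ) : PErg μ T (fun _ => c) := by
  unfold PErg
  refine Filter.Eventually.of_forall fun x => ?_
  simp only [Finset.sum_const, Fbox_card, nsmul_eq_mul, integral_const, probReal_univ,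
    smul_eq_mul, one_mul]
  refine tendsto_const_nhds.congr' ?_
  filter_upwards [eventually_gt_atTop 0] with n hn
  have : ((n ^ d : ℕ) : ℝ) ≠ 0 := by positivity
  field_simp

lemma cob_tendsto {d : ℕ} (a : (Fin d → ℤ) → ℝ) (C : ℝ) (ha : ∀ j, |a j| ≤ C) (i : Fin d → ℤ) :
    Tendsto (fun n : ℕ => (∑ j ∈ Fbox d n, (a j - a (i + j))) / ((Fbox d n).card : ℝ)) atTop
      (nhds 0) := by
  obtain ⟨K, hK⟩ : ∃ K : ℕ, ∀ k, |i k| ≤ K := by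
    refine ⟨∑ k, (i k).natAbs, fun k => ?_⟩
    have := Finset.single_le_sum (f := fun k => (i k).natAbs) (fun _ _ => Nat.zero_le _)
      (Finset.mem_univ k)
    rw [Int.abs_eq_natAbs]
    exact_mod_cast this
  have hbound : ∀ m : ℕ, |∑ j ∈ Fbox d (m + 2 * K), (a j - a (i + j))| ≤
      2 * C * (((m + 2 * K : ℕ) : ℝ) ^ d - (m : ℝ) ^ d) := by
    intro m
    set F := Fbox d (m + 2 * K) with hF
    set F' := F.image (fun j => i + j) with hF'
    set I := (Fbox d m).image (fun j => j + (fun _ => (K : ℤ))) with hI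
    have hIF : I ⊆ F := by
      intro p hp
      obtain ⟨v, hv, rfl⟩ := Finset.mem_image.1 hp
      rw [hF]
      rw [Fbox_mem] at *
      intro k
      have := hv k
      simp only [Pi.add_apply]
      push_cast
      omega
    have hIF' : I ⊆ F' := by
      intro p hp
      obtain ⟨v, hv, rfl⟩ := Finset.mem_image.1 hp
      rw [hF', Finset.mem_image]
      refine ⟨v + (fun _ => (K : ℤ)) - i, ?_, by abel⟩
      rw [hF]
      rw [Fbox_mem] at *
      intro k
      have := hv k
      have h2 := abs_le.1 (hK k)
      simp only [Pi.add_apply, Pi.sub_apply]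
      push_cast
      omega
    have hIc : I.card = m ^ d := by
      rw [hI, Finset.card_image_of_injective _ (add_left_injective _), Fbox_card]
    have hF'c : F'.card = (m + 2 * K) ^ d := by
      rw [hF', Finset.card_image_of_injective _ (add_right_injective _), hF, Fbox_card]
    have hFc : F.card = (m + 2 * K) ^ d := by
      rw [hF, Fbox_card]
    have hsum' : ∑ j ∈ F, a (i + j) = ∑ j ∈ F', a j := by
      rw [hF', Finset.sum_image]
      intro x _ y _ hxy
      exact add_left_cancel hxy
    have hdiff : ∀ S : Finset (Fin d → ℤ), I ⊆ S → S.card = (m + 2 * K) ^ d →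
        |∑ j ∈ S \ I, a j| ≤ C * (((m + 2 * K : ℕ) : ℝ) ^ d - (m : ℝ) ^ d) := by
      intro S hS hSc
      refine (Finset.abs_sum_le_sum_abs _ _).trans ?_
      refine (Finset.sum_le_sum fun j _ => ha j).trans ?_
      rw [Finset.sum_const, nsmul_eq_mul, Finset.card_sdiff_of_subset hS, hIc, hSc,
        Nat.cast_sub (Nat.pow_le_pow_left (by omega) d)]
      push_cast
      linarith
    rw [Finset.sum_sub_distrib, hsum', ← Finset.sum_sdiff hIF, ← Finset.sum_sdiff hIF']
    have h1 := hdiff F hIF hFc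
    have h2 := hdiff F' hIF' hF'c
    rw [add_sub_add_right_eq_sub]
    refine (abs_sub _ _).trans ?_
    linarith
  rw [← tendsto_add_atTop_iff_nat (2 * K)]
  have hlim : Tendsto (fun m : ℕ => 2 * C * (1 - ((((m + 2 * K : ℕ) : ℝ) / m) ^ d)⁻¹)) atTop
      (nhds 0) := by
    have := ((tendsto_ratio d (2 * K)).inv₀ one_ne_zero).const_sub 1 |>.const_mul (2 * C)
    simpa using this
  refine squeeze_zero_norm' ?_ hlim
  filter_upwards [eventually_gt_atTop 0] with m hm
  rw [Fbox_card, Real.norm_eq_abs, abs_div, abs_of_nonneg (a := (((m + 2 * K) ^ d : ℕ) : ℝ))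
    (by positivity)]
  have hp : (0 : ℝ) < ((m + 2 * K : ℕ) : ℝ) ^ d := by
    have : 0 < m + 2 * K := by omega
    positivity
  rw [Nat.cast_pow, div_le_iff₀ hp]
  refine (hbound m).trans (le_of_eq ?_)
  have hm' : (m : ℝ) ^ d ≠ 0 := by positivity
  rw [div_pow, inv_div]
  field_simp

lemma PErg_cob {d : ℕ} [MeasurableSpace X] {μ : Measure X} [IsProbabilityMeasure μ]
    {T : (Fin d → ℤ) → X → X} (hT : ∀ j, MeasurePreserving (T j) μ μ)
    (hTadd : ∀ i j, T (i + j) = T i ∘ T j) (h : X → ℝ) (hm : Measurable h) (C : ℝ)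
    (hC : ∀ x, |h x| ≤ C) (i : Fin d → ℤ) : PErg μ T (fun x => h x - h (T i x)) := by
  have hi : Integrable h μ := Integrable.of_bound hm.aestronglyMeasurable C
    (Filter.Eventually.of_forall hC)
  have hi2 : Integrable (fun x => h (T i x)) μ := (hT i).integrable_comp_of_integrable hi
  have h0 : ∫ x, (h x - h (T i x)) ∂μ = 0 := by
    rw [integral_sub hi hi2]
    have : ∫ x, h (T i x) ∂μ = ∫ x, h x ∂μ := by
      rw [← integral_map (hT i).aemeasurable (f := h) hm.aestronglyMeasurable, (hT i).map_eq]
    rw [this, sub_self]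
  unfold PErg
  rw [h0]
  refine Filter.Eventually.of_forall fun x => ?_
  have := cob_tendsto (fun j => h (T j x)) C (fun j => hC _) i
  simpa only [hTadd, Function.comp] using this

lemma PErg_approx {d : ℕ} [MeasurableSpace X] {μ : Measure X} [IsProbabilityMeasure μ]
    {T : (Fin d → ℤ) → X → X} (hT : ∀ j, MeasurePreserving (T j) μ μ)
    (hTadd : ∀ i j, T (i + j) = T i ∘ T j) (g : X → ℝ) (hg : Integrable g μ)
    (H : ∀ δ : ENNReal, δ ≠ 0 → ∃ v : X → ℝ, Integrable v μ ∧ PErg μ T v ∧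
      eLpNorm (g - v) 1 μ ≤ δ) : PErg μ T g := by
  set A : X → ℕ → ℝ := fun x n => (∑ j ∈ Fbox d n, g (T j x)) / ((Fbox d n).card : ℝ) with hA
  have main : ∀ η : ℝ, 0 < η → ∀ᵐ x ∂μ, ∀ᶠ n in atTop, |A x n - ∫ y, g y ∂μ| ≤ 3 * η := by
    intro η hη
    have hηE : ENNReal.ofReal η ≠ 0 := by simpa using hη
    have hbd : ∀ δ : ENNReal, δ ≠ 0 → δ ≤ ENNReal.ofReal η →
        ENNReal.ofReal η * μ {x | ¬ ∀ᶠ n in atTop, |A x n - ∫ y, g y ∂μ| ≤ 3 * η} ≤ 3 ^ d * δ := by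
      intro δ hδ hδη
      obtain ⟨v, hvi, hvP, hvn⟩ := H δ hδ
      rw [eLpNorm_one_eq_lintegral_enorm] at hvn
      have hfin : ∫⁻ x, ‖(g - v) x‖ₑ ∂μ ≠ ⊤ :=
        ne_top_of_le_ne_top ENNReal.ofReal_ne_top (hvn.trans hδη)
      have hmax := maximal_all μ T hT hTadd (fun x => ‖(g - v) x‖ₑ)
        (hg.sub hvi).aestronglyMeasurable.enorm hfin (ENNReal.ofReal η) ENNReal.ofReal_ne_top
      refine le_trans ?_ (hmax.trans (by gcongr))
      gcongr 1
      refine measure_mono_ae ?_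
      filter_upwards [hvP] with x hx hbad
      by_contra hcon
      apply hbad
      have hcon' : ∀ n : ℕ, 1 ≤ n → ∑ i ∈ Fbox d n, ‖(g - v) (T i x)‖ₑ <
          ENNReal.ofReal η * ((n ^ d : ℕ) : ENNReal) := by
        intro n hn
        by_contra hc
        exact hcon ⟨n, hn, not_lt.1 hc⟩
      have hint : |∫ y, v y ∂μ - ∫ y, g y ∂μ| ≤ η := by
        rw [abs_sub_comm, ← integral_sub hg hvi, ← Real.norm_eq_abs]
        have h1 := enorm_integral_le_lintegral_enorm (μ := μ) (fun y => g y - v y)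
        have h2 : ‖∫ y, (g y - v y) ∂μ‖ₑ ≤ ENNReal.ofReal η := h1.trans (hvn.trans hδη)
        rw [← ofReal_norm] at h2
        exact (ENNReal.ofReal_le_ofReal_iff hη.le).1 h2
      have hx' := (Metric.tendsto_nhds.1 hx) η hη
      filter_upwards [hx', eventually_ge_atTop 1] with n hn hn1
      rw [Real.dist_eq] at hn
      have hnp : (0 : ℝ) < ((Fbox d n).card : ℝ) := by
        rw [Fbox_card]
        have : 0 < n := hn1
        positivity
      have hdiff : |A x n - (∑ j ∈ Fbox d n, v (T j x)) / ((Fbox d n).card : ℝ)| ≤ η := by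
        rw [hA]
        simp only
        rw [← sub_div, ← Finset.sum_sub_distrib, abs_div, abs_of_pos hnp, div_le_iff₀ hnp]
        refine (Finset.abs_sum_le_sum_abs _ _).trans ?_
        have h3 := (hcon' n hn1).le
        have h4 : ∑ i ∈ Fbox d n, ‖(g - v) (T i x)‖ₑ =
            ENNReal.ofReal (∑ i ∈ Fbox d n, |g (T i x) - v (T i x)|) := by
          rw [ENNReal.ofReal_sum_of_nonneg (fun _ _ => abs_nonneg _)]
          refine Finset.sum_congr rfl fun i _ => ?_
          rw [← ofReal_norm, Real.norm_eq_abs]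
          rfl
        rw [h4, ← ENNReal.ofReal_natCast, ← ENNReal.ofReal_mul hη.le,
          ENNReal.ofReal_le_ofReal_iff (by positivity)] at h3
        rw [Fbox_card]
        exact h3
      rw [abs_le] at *
      rw [abs_lt] at hn
      constructor <;> linarith [hdiff.1, hdiff.2, hint.1, hint.2, hn.1, hn.2]
    have hz : ENNReal.ofReal η * μ {x | ¬ ∀ᶠ n in atTop, |A x n - ∫ y, g y ∂μ| ≤ 3 * η} ≤ 0 := by
      have hlim : Tendsto (fun δ : ENNReal => 3 ^ d * δ) (nhdsWithin 0 (Set.Ioi 0)) (nhds 0) := by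
        have : Tendsto (fun δ : ENNReal => 3 ^ d * δ) (nhds 0) (nhds (3 ^ d * 0)) :=
          ENNReal.Tendsto.const_mul tendsto_id (Or.inr (by simp))
        rw [mul_zero] at this
        exact this.mono_left nhdsWithin_le_nhds
      refine ge_of_tendsto hlim ?_
      have h1 : ∀ᶠ δ : ENNReal in nhdsWithin 0 (Set.Ioi 0), δ ≤ ENNReal.ofReal η := by
        refine Filter.Eventually.filter_mono nhdsWithin_le_nhds ?_
        exact Iic_mem_nhds (pos_iff_ne_zero.2 hηE)
      filter_upwards [h1, self_mem_nhdsWithin] with δ h1 h2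
      exact hbd δ (ne_of_gt h2) h1
    rw [nonpos_iff_eq_zero, mul_eq_zero] at hz
    exact hz.resolve_left hηE
  have main' : ∀ᵐ x ∂μ, ∀ m : ℕ, ∀ᶠ n in atTop,
      |A x n - ∫ y, g y ∂μ| ≤ 3 * (1 / ((m : ℝ) + 1)) := by
    rw [ae_all_iff]
    exact fun m => main _ (by positivity)
  filter_upwards [main'] with x hx
  rw [Metric.tendsto_nhds]
  intro ε hε
  obtain ⟨m, hm⟩ := exists_nat_one_div_lt (show (0 : ℝ) < ε / 3 by positivity)
  filter_upwards [hx m] with n hn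
  rw [Real.dist_eq]
  exact lt_of_le_of_lt hn (by linarith)

lemma erg_ae {d : ℕ} [MeasurableSpace X] {μ : Measure X} [IsProbabilityMeasure μ]
    {T : (Fin d → ℤ) → X → X} (hT : ∀ j, MeasurePreserving (T j) μ μ)
    (hTadd : ∀ i j, T (i + j) = T i ∘ T j)
    (herg : ∀ A : Set X, MeasurableSet A → (∀ j, T j ⁻¹' A = A) → μ A = 0 ∨ μ A = 1)
    (A : Set X) (hA : MeasurableSet A) (hinv : ∀ j, ∀ᵐ x ∂μ, (T j x ∈ A ↔ x ∈ A)) :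
    μ A = 0 ∨ μ A = 1 := by
  have hBm : MeasurableSet (⋂ j, T j ⁻¹' A) :=
    MeasurableSet.iInter fun j => (hT j).measurable hA
  have hB := herg (⋂ j, T j ⁻¹' A) hBm (by
    intro i
    ext x
    simp only [Set.mem_preimage, Set.mem_iInter]
    constructor
    · intro h j
      have := h (j - i)
      have e : T (j - i) (T i x) = T j x := by
        rw [← Function.comp_apply (f := T (j - i)), ← hTadd]
        simp
      rwa [e] at this
    · intro h j
      rw [← Function.comp_apply (f := T j), ← hTadd]
      exact h _)
  have hAB : μ (⋂ j, T j ⁻¹' A) = μ A := by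
    refine measure_congr ?_
    rw [eventuallyEq_set]
    filter_upwards [ae_all_iff.2 hinv] with x hx
    simp only [Set.mem_iInter, Set.mem_preimage, hx, forall_const]
  rwa [hAB] at hB

lemma inv_const {d : ℕ} [MeasurableSpace X] {μ : Measure X} [IsProbabilityMeasure μ]
    {T : (Fin d → ℤ) → X → X} (hT : ∀ j, MeasurePreserving (T j) μ μ)
    (hTadd : ∀ i j, T (i + j) = T i ∘ T j)
    (herg : ∀ A : Set X, MeasurableSet A → (∀ j, T j ⁻¹' A = A) → μ A = 0 ∨ μ A = 1)
    (ψ : X → ℝ) (hψ : Measurable ψ) (hinv : ∀ j, ∀ᵐ x ∂μ, ψ (T j x) = ψ x) :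
    ∃ c : ℝ, ψ =ᵐ[μ] fun _ => c := by
  refine exists_eventuallyEq_const_of_forall_separating (l := ae μ) (f := ψ) MeasurableSet ?_
  intro U hU
  have := erg_ae hT hTadd herg (ψ ⁻¹' U) (hψ hU) (by
    intro j
    filter_upwards [hinv j] with x hx
    simp only [Set.mem_preimage, hx])
  rcases this with h | h
  · right
    exact measure_eq_zero_iff_ae_notMem.1 h
  · left
    exact (mem_ae_iff_prob_eq_one (hψ hU)).2 h

/-- The submodule of `L²` where the averages converge. -/
def Wsub {d : ℕ} [MeasurableSpace X] (μ : Measure X) [IsProbabilityMeasure μ]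
    (T : (Fin d → ℤ) → X → X) (hT : ∀ j, MeasurePreserving (T j) μ μ) :
    Submodule ℝ (Lp ℝ 2 μ) where
  carrier := {w | PErg μ T w}
  add_mem' := by
    intro a b ha hb
    exact PErg_congr hT (Lp.coeFn_add a b).symm
      (PErg_add ((Lp.memLp a).integrable (by norm_num)) ((Lp.memLp b).integrable (by norm_num)) ha hb)
  zero_mem' := PErg_congr hT (Lp.coeFn_zero ℝ 2 μ).symm (PErg_const 0)
  smul_mem' := by
    intro c a ha
    exact PErg_congr hT (Lp.coeFn_smul c a).symm (PErg_smul c ha)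

lemma Wsub_dense {d : ℕ} [MeasurableSpace X] {μ : Measure X} [IsProbabilityMeasure μ]
    {T : (Fin d → ℤ) → X → X} (hT : ∀ j, MeasurePreserving (T j) μ μ)
    (hTadd : ∀ i j, T (i + j) = T i ∘ T j)
    (herg : ∀ A : Set X, MeasurableSet A → (∀ j, T j ⁻¹' A = A) → μ A = 0 ∨ μ A = 1) :
    (Wsub μ T hT).topologicalClosure = ⊤ := by
  rw [Submodule.topologicalClosure_eq_top_iff, Submodule.eq_bot_iff]
  intro ψ hψ
  rw [Submodule.mem_orthogonal] at hψ
  have h1 : ∀ i, ∀ h : Lp ℝ 2 μ,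
      inner ℝ (h - Lp.compMeasurePreserving (T i) (hT i) h) ψ = 0 := by
    intro i h
    refine Lp.induction (p := 2) (by norm_num)
      (fun h : Lp ℝ 2 μ => inner ℝ (h - Lp.compMeasurePreserving (T i) (hT i) h) ψ = 0)
      ?_ ?_ ?_ h
    · intro c s hs hμs
      apply hψ
      rw [Lp.simpleFunc.coe_indicatorConst]
      have hc := indicatorConstLp_coeFn (p := 2) (hs := hs) (hμs := hμs.ne) (c := c)
      have hP := PErg_cob hT hTadd (s.indicator (fun _ => c)) (measurable_const.indicator hs) |c|
        (by
          intro x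
          by_cases hx : x ∈ s <;> simp [hx]) i
      refine PErg_congr hT ?_ hP
      refine EventuallyEq.symm ?_
      refine (Lp.coeFn_sub _ _).trans ?_
      have hc2 := (hT i).quasiMeasurePreserving.ae_eq_comp hc
      filter_upwards [hc, hc2, Lp.coeFn_compMeasurePreserving (indicatorConstLp 2 hs hμs.ne c) (hT i)]
        with x a1 a2 a3
      simp only [Pi.sub_apply, a1, a3]
      simp only [Function.comp_apply] at a2 ⊢
      rw [a2]
    · intro f g hf hg _ h1 h2
      have e : ∀ a b : Lp ℝ 2 μ, a + b - Lp.compMeasurePreserving (T i) (hT i) (a + b) =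
        (a - Lp.compMeasurePreserving (T i) (hT i) a) +
          (b - Lp.compMeasurePreserving (T i) (hT i) b) := by
        intro a b
        rw [map_add]
        abel
      rw [e, inner_add_left, h1, h2, add_zero]
    · have hc : Continuous (fun h : Lp ℝ 2 μ => Lp.compMeasurePreserving (T i) (hT i) h) :=
        (Lp.isometry_compMeasurePreserving (hT i)).continuous
      exact isClosed_eq ((continuous_id.sub hc).inner continuous_const) continuous_const
  have h2 : ∀ i, Lp.compMeasurePreserving (T i) (hT i) ψ = ψ := by
    intro i
    have e1 := h1 i ψ
    rw [inner_sub_left, real_inner_self_eq_norm_sq] at e1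
    have e2 := norm_sub_sq_real (Lp.compMeasurePreserving (T i) (hT i) ψ) ψ
    rw [Lp.norm_compMeasurePreserving] at e2
    have e3 : ‖Lp.compMeasurePreserving (T i) (hT i) ψ - ψ‖ ^ 2 = 0 := by
      rw [e2]; linarith
    exact sub_eq_zero.1 (norm_eq_zero.1 (pow_eq_zero_iff two_ne_zero |>.1 e3))
  obtain ⟨c, hc⟩ := inv_const hT hTadd herg ψ (Lp.stronglyMeasurable ψ).measurable (by
    intro i
    have := Lp.coeFn_compMeasurePreserving ψ (hT i)
    rw [h2 i] at this
    filter_upwards [this] with x hx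
    rw [hx]; rfl)
  have h3 := hψ ((memLp_const (1 : ℝ)).toLp (fun _ : X => (1 : ℝ)))
    (PErg_congr hT (MemLp.coeFn_toLp (memLp_const (1 : ℝ))).symm (PErg_const 1))
  rw [L2.inner_def] at h3
  have h4 : ∫ x, inner ℝ (((memLp_const (1 : ℝ)).toLp (fun _ : X => (1 : ℝ)) : Lp ℝ 2 μ) x) (ψ x) ∂μ
      = ∫ x, c ∂μ := by
    refine integral_congr_ae ?_
    filter_upwards [hc, MemLp.coeFn_toLp (memLp_const (p := 2) (μ := μ) (1 : ℝ))] with x a1 a2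
    rw [a1, a2]
    simp
  rw [h4] at h3
  simp only [integral_const, probReal_univ, one_smul] at h3
  subst h3
  exact (Lp.eq_zero_iff_ae_eq_zero).2 hc

theorem pointwise_ergodic {d : ℕ} [MeasurableSpace X] {μ : Measure X} [IsProbabilityMeasure μ]
    {T : (Fin d → ℤ) → X → X} (hT : ∀ j, MeasurePreserving (T j) μ μ)
    (hTadd : ∀ i j, T (i + j) = T i ∘ T j)
    (herg : ∀ A : Set X, MeasurableSet A → (∀ j, T j ⁻¹' A = A) → μ A = 0 ∨ μ A = 1)
    (g : X → ℝ) (hg : Integrable g μ) : PErg μ T g := by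
  have hL2 : ∀ g : X → ℝ, MemLp g 2 μ → PErg μ T g := by
    intro g hg
    refine PErg_approx hT hTadd g (hg.integrable (by norm_num)) ?_
    intro δ hδ
    have hmem : hg.toLp g ∈ (Wsub μ T hT).topologicalClosure := by
      rw [Wsub_dense hT hTadd herg]; trivial
    have hmem' : hg.toLp g ∈ closure ((Wsub μ T hT) : Set (Lp ℝ 2 μ)) := hmem
    obtain ⟨w, hw, hd⟩ := EMetric.mem_closure_iff.1 hmem' δ (pos_iff_ne_zero.2 hδ)
    refine ⟨w, (Lp.memLp w).integrable (by norm_num), hw, ?_⟩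
    rw [Lp.edist_def] at hd
    have e : eLpNorm (g - (w : X → ℝ)) 2 μ =
        eLpNorm ((hg.toLp g : X → ℝ) - (w : X → ℝ)) 2 μ := by
      refine eLpNorm_congr_ae ?_
      filter_upwards [hg.coeFn_toLp] with x hx
      simp only [Pi.sub_apply, hx]
    refine (eLpNorm_le_eLpNorm_of_exponent_le (q := 2) (by norm_num)
      (hg.aestronglyMeasurable.sub (Lp.aestronglyMeasurable w))).trans ?_
    rw [e]
    exact hd.le
  refine PErg_approx hT hTadd g hg ?_
  intro δ hδ
  obtain ⟨s, hs, hsm⟩ := (memLp_one_iff_integrable.2 hg).exists_simpleFunc_eLpNorm_sub_lt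
    (by norm_num) hδ
  exact ⟨s, memLp_one_iff_integrable.1 hsm, hL2 s (s.memLp_of_isFiniteMeasure 2 μ), hs.le⟩

/-- The finite averages defining `dF`. -/
def dFn {d : ℕ} (T : (Fin d → ℤ) → X → X) (f : X → ℂ) (x y : X) (n : ℕ) : ℝ :=
  Real.sqrt ((∑ j ∈ Fbox d n, ‖f (T j x) - f (T j y)‖ ^ 2) / ((Fbox d n).card : ℝ))

lemma sqrt_avg_add {ι : Type*} (F : Finset ι) (a b : ι → ℂ) :
    Real.sqrt ((∑ j ∈ F, ‖a j + b j‖ ^ 2) / (F.card : ℝ)) ≤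
      Real.sqrt ((∑ j ∈ F, ‖a j‖ ^ 2) / (F.card : ℝ)) +
      Real.sqrt ((∑ j ∈ F, ‖b j‖ ^ 2) / (F.card : ℝ)) := by
  have hp : ∀ u : ι → ℂ, 0 ≤ ∑ j ∈ F, ‖u j‖ ^ 2 := fun u =>
    Finset.sum_nonneg fun _ _ => by positivity
  rw [Real.sqrt_div (hp _), Real.sqrt_div (hp _), Real.sqrt_div (hp _), ← add_div]
  gcongr
  have h1 : Real.sqrt (∑ j ∈ F, ‖a j + b j‖ ^ 2) ≤ Real.sqrt (∑ j ∈ F, (‖a j‖ + ‖b j‖) ^ 2) := by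
    gcongr with j
    exact norm_add_le _ _
  refine h1.trans ?_
  have := Real.Lp_add_le_of_nonneg (s := F) (f := fun j => ‖a j‖) (g := fun j => ‖b j‖)
    (p := 2) (by norm_num) (fun _ _ => norm_nonneg _) (fun _ _ => norm_nonneg _)
  simp only [Real.rpow_two, ← Real.sqrt_eq_rpow] at this
  exact this

lemma dFn_triangle {d : ℕ} (T : (Fin d → ℤ) → X → X) (f : X → ℂ) (x y z : X) (n : ℕ) :
    dFn T f y z n ≤ dFn T f x y n + dFn T f x z n := by
  have := sqrt_avg_add (Fbox d n) (fun j => f (T j y) - f (T j x)) (fun j => f (T j x) - f (T j z))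
  simp only [sub_add_sub_cancel] at this
  refine this.trans (le_of_eq ?_)
  unfold dFn
  congr 3
  refine Finset.sum_congr rfl fun j _ => ?_
  rw [norm_sub_rev]

lemma dFn_bdd {d : ℕ} [MeasurableSpace X] {μ : Measure X} {T : (Fin d → ℤ) → X → X} {f : X → ℂ}
    {x y : X} (hx : genericSq μ T f x) (hy : genericSq μ T f y) :
    IsBoundedUnder (· ≤ ·) atTop (dFn T f x y) := by
  have h := (hx.sqrt.add hy.sqrt).isBoundedUnder_le
  refine h.mono_le (Filter.Eventually.of_forall fun n => ?_)
  have := sqrt_avg_add (Fbox d n) (fun j => f (T j x)) (fun j => - f (T j y))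
  simp only [← sub_eq_add_neg, norm_neg] at this
  exact this

lemma dFn_cobdd {d : ℕ} {T : (Fin d → ℤ) → X → X} {f : X → ℂ}
    {x y : X} : IsCoboundedUnder (· ≤ ·) atTop (dFn T f x y) := by
  refine IsBoundedUnder.isCoboundedUnder_le ⟨0, ?_⟩
  simp only [eventually_map]
  exact Filter.Eventually.of_forall fun n => Real.sqrt_nonneg _

lemma dF_triangle {d : ℕ} [MeasurableSpace X] {μ : Measure X} {T : (Fin d → ℤ) → X → X}
    {f : X → ℂ} {x y z : X} (hx : genericSq μ T f x) (hy : genericSq μ T f y)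
    (hz : genericSq μ T f z) : dF T f y z ≤ dF T f x y + dF T f x z := by
  refine le_of_forall_pos_le_add fun δ hδ => ?_
  have h1 : ∀ᶠ n in atTop, dFn T f x y n < dF T f x y + δ / 2 :=
    eventually_lt_of_limsup_lt (show limsup (dFn T f x y) atTop < _ by
      change dF T f x y < _; linarith) (dFn_bdd hx hy)
  have h2 : ∀ᶠ n in atTop, dFn T f x z n < dF T f x z + δ / 2 :=
    eventually_lt_of_limsup_lt (show limsup (dFn T f x z) atTop < _ by
      change dF T f x z < _; linarith) (dFn_bdd hx hz)
  change limsup (dFn T f y z) atTop ≤ _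
  refine limsup_le_of_le dFn_cobdd ?_
  filter_upwards [h1, h2] with n h1 h2
  have := dFn_triangle T f x y z n
  linarith

lemma dF_measurable {d : ℕ} [MeasurableSpace X] {T : (Fin d → ℤ) → X → X}
    (hT : ∀ j, Measurable (T j)) {f : X → ℂ} (hf : Measurable f) :
    Measurable (fun p : X × X => dF T f p.1 p.2) := by
  unfold dF
  refine Measurable.limsup fun n => ?_
  refine Measurable.sqrt (Measurable.div_const (Finset.measurable_sum _ fun j _ => ?_) _)
  exact (((hf.comp ((hT j).comp measurable_fst)).sub
    (hf.comp ((hT j).comp measurable_snd))).norm).pow_const 2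

lemma dF_congr {d : ℕ} {T : (Fin d → ℤ) → X → X} {f g : X → ℂ} {x y : X}
    (hx : ∀ j, f (T j x) = g (T j x)) (hy : ∀ j, f (T j y) = g (T j y)) :
    dF T f x y = dF T g x y := by
  unfold dF
  simp only [hx, hy]

end helpers

/-- for an ergodic MPS and `f ∈ L²(X,μ)`, the following are equivalent:
(1) `μ-f`-mean sensitivity; (2) `μ-f`-mean expansivity;
(3) there is `ε > 0` with `μ(B_ε^f(x)) = 0` for a.e. `x`. -/
theorem stmt5 {d : ℕ}
    [MeasurableSpace X] (μ : Measure X) [IsProbabilityMeasure μ]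
    (T : (Fin d → ℤ) → X → X)
    (hT : ∀ j, MeasurePreserving (T j) μ μ)
    (hTadd : ∀ i j, T (i + j) = T i ∘ T j)
    (herg : ∀ A : Set X, MeasurableSet A → (∀ j, T j ⁻¹' A = A) → μ A = 0 ∨ μ A = 1)
    (f : X → ℂ) (hf : MemLp f 2 μ) :
    [MeanSensitiveFun μ T f,
     MeanExpansiveFun μ T f,
     ∃ ε : ℝ, 0 < ε ∧ ∀ᵐ x ∂μ, μ {y : X | dF T f x y ≤ ε} = 0].TFAE := by
  obtain ⟨g, hgm, hfg⟩ : ∃ g : X → ℂ, Measurable g ∧ f =ᵐ[μ] g :=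
    ⟨hf.1.mk f, hf.1.stronglyMeasurable_mk.measurable, hf.1.ae_eq_mk⟩
  have hae : ∀ᵐ x ∂μ, ∀ j, f (T j x) = g (T j x) := by
    rw [ae_all_iff]
    exact fun j => (hT j).quasiMeasurePreserving.ae_eq_comp hfg
  have hgen : ∀ᵐ x ∂μ, genericSq μ T f x :=
    pointwise_ergodic hT hTadd herg (fun x => ‖f x‖ ^ 2) (hf.integrable_norm_pow (by norm_num))
  have hdm : Measurable (fun p : X × X => dF T g p.1 p.2) :=
    dF_measurable (fun j => (hT j).measurable) hgm
  have hpair : ∀ᵐ p ∂(μ.prod μ), dF T f p.1 p.2 = dF T g p.1 p.2 := by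
    filter_upwards [Measure.quasiMeasurePreserving_fst.ae hae,
      Measure.quasiMeasurePreserving_snd.ae hae] with p h1 h2
    exact dF_congr h1 h2
  have hball : ∀ ε : ℝ, ∀ᵐ x ∂μ, μ {y | dF T f x y ≤ ε} = μ {y | dF T g x y ≤ ε} := by
    intro ε
    filter_upwards [hae] with x hx
    refine measure_congr ?_
    rw [eventuallyEq_set]
    filter_upwards [hae] with y hy
    rw [dF_congr hx hy]
  have hmle : ∀ ε : ℝ, MeasurableSet {p : X × X | dF T g p.1 p.2 ≤ ε} := fun ε =>
    measurableSet_le hdm measurable_const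
  have h23 : ∀ ε : ℝ, (μ.prod μ) {p : X × X | ε < dF T f p.1 p.2} = 1 ↔
      ∀ᵐ x ∂μ, μ {y : X | dF T f x y ≤ ε} = 0 := by
    intro ε
    have e1 : (μ.prod μ) {p : X × X | ε < dF T f p.1 p.2} =
        (μ.prod μ) {p : X × X | dF T g p.1 p.2 ≤ ε}ᶜ := by
      refine measure_congr ?_
      rw [eventuallyEq_set]
      filter_upwards [hpair] with p hp
      change ε < dF T f p.1 p.2 ↔ ¬ (dF T g p.1 p.2 ≤ ε)
      rw [hp, not_le]
    rw [e1, prob_compl_eq_one_iff (hmle ε), Measure.measure_prod_null (hmle ε)]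
    constructor
    · intro h
      filter_upwards [h, hball ε] with x h1 h2
      rw [h2]; exact h1
    · intro h
      filter_upwards [h, hball ε] with x h1 h2
      rw [h2] at h1; exact h1
  have t23 : MeanExpansiveFun μ T f ↔
      ∃ ε : ℝ, 0 < ε ∧ ∀ᵐ x ∂μ, μ {y : X | dF T f x y ≤ ε} = 0 := by
    unfold MeanExpansiveFun
    simp only [h23]
  tfae_have 2 ↔ 3 := t23
  tfae_have 3 → 1 := by
    rintro ⟨ε, hε, h⟩
    refine ⟨ε, hε, fun A hA hμA => ?_⟩
    have hfreq : ∃ᵐ x ∂μ, x ∈ A := frequently_ae_mem_iff.2 hμA.ne'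
    obtain ⟨x, hxA, hx0, hxg⟩ := (hfreq.and_eventually (h.and hgen)).exists
    have hlt : ∀ᵐ y ∂μ, ε < dF T f x y := by
      have : ∀ᵐ y ∂μ, y ∉ {y : X | dF T f x y ≤ ε} := measure_eq_zero_iff_ae_notMem.1 hx0
      filter_upwards [this] with y hy
      exact not_le.1 hy
    obtain ⟨y, hyA, hy0, hyg⟩ := (hfreq.and_eventually (hlt.and hgen)).exists
    exact ⟨x, hxA, y, hyA, hxg, hyg, hy0⟩
  tfae_have 1 → 3 := by
    rintro ⟨ε, hε, h⟩
    refine ⟨ε / 2, by positivity, ?_⟩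
    obtain ⟨N, hNsub, hNm, hN0⟩ := exists_measurable_superset_of_null
      (ae_iff.1 (hae.and hgen))
    have hNmem : ∀ᵐ x ∂μ, x ∉ N := measure_eq_zero_iff_ae_notMem.1 hN0
    have hNgood : ∀ x, x ∉ N → (∀ j, f (T j x) = g (T j x)) ∧ genericSq μ T f x := by
      intro x hx
      by_contra hc
      exact hx (hNsub hc)
    filter_upwards [hball (ε / 2), hNmem] with x hx hxN
    rw [hx]
    by_contra hne
    have hsm : MeasurableSet {y : X | dF T g x y ≤ ε / 2} :=
      measurable_prodMk_left (x := x) (hmle (ε / 2))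
    have hpos : 0 < μ ({y : X | dF T g x y ≤ ε / 2} \ N) := by
      rw [measure_sdiff_null hN0]
      exact pos_iff_ne_zero.2 hne
    obtain ⟨y, ⟨hy, hyN⟩, z, ⟨hz, hzN⟩, gy, gz, hyz⟩ := h _ (hsm.diff hNm) hpos
    have hgx := hNgood x hxN
    have htri := dF_triangle hgx.2 gy gz
    rw [dF_congr hgx.1 (hNgood y hyN).1, dF_congr hgx.1 (hNgood z hzN).1] at htri
    have hy' : dF T g x y ≤ ε / 2 := hy
    have hz' : dF T g x z ≤ ε / 2 := hz
    linarith
  tfae_finish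
end
end

section
/- Let (X,Σ,μ,T) be a measure-preserving ℤ^d-system and let f : X → ℂ be a bounded measurable function with |f(x)| ≤ 1/2 for all x. Then for all x,y generic for |f|²: (a) d_f(x,y)² ≤ d'_f(x,y); (b) for every ε > 0, if ρ_f(x,y) < ε/2 then d'_f(x,y) < ε; and (c) for every ε > 0, if d_f(x,y)² < ε³ then ρ_f(x,y) < ε. Consequently the pseudometrics d_f, d'_f and ρ_f generate the same topology on the set of points generic for |f|². -/
open MeasureTheory Filter Finset Metric
open scoped Classical

noncomputable section

variable {X : Type*}

/-- The pseudometric `d'_f(x,y) = limsup_n (1/|F_n|) Σ_{j∈F_n} |f(T^j x) − f(T^j y)|`. -/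
def dF' {d : ℕ} (T : (Fin d → ℤ) → X → X) (f : X → ℂ) (x y : X) : ℝ :=
  Filter.limsup (fun n : ℕ =>
    (∑ j ∈ Fbox d n, ‖f (T j x) - f (T j y)‖) / ((Fbox d n).card : ℝ))
    Filter.atTop

/-- The pseudometric `ρ_f(x,y) = inf {ε > 0 : D̄({i : |f(T^i x) − f(T^i y)| > ε}) < ε}`. -/
def rhoF {d : ℕ} (T : (Fin d → ℤ) → X → X) (f : X → ℂ) (x y : X) : ℝ :=
  sInf {ε : ℝ | 0 < ε ∧ upperDensity d {i | ε < ‖f (T i x) - f (T i y)‖} < ε}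

lemma bdd_of_mem {u : ℕ → ℝ} (h0 : ∀ n, 0 ≤ u n) (h1 : ∀ n, u n ≤ 1) :
    IsBoundedUnder (· ≤ ·) atTop u ∧ IsCoboundedUnder (· ≤ ·) atTop u := by
  refine ⟨isBoundedUnder_of ⟨1, h1⟩, ?_⟩
  exact (isBoundedUnder_of ⟨0, h0⟩ : IsBoundedUnder (· ≥ ·) atTop u).isCoboundedUnder_flip

lemma limsup_le_of_ev {u : ℕ → ℝ} (h0 : ∀ n, 0 ≤ u n) (h1 : ∀ n, u n ≤ 1) {c : ℝ}
    (h : ∀ᶠ n in atTop, u n ≤ c) : limsup u atTop ≤ c :=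
  limsup_le_of_le (bdd_of_mem h0 h1).2 h

lemma ev_lt_of_limsup {u : ℕ → ℝ} (h0 : ∀ n, 0 ≤ u n) (h1 : ∀ n, u n ≤ 1) {c : ℝ}
    (h : limsup u atTop < c) : ∀ᶠ n in atTop, u n < c :=
  eventually_lt_of_limsup_lt h (bdd_of_mem h0 h1).1

lemma limsup_nonneg_aux {u : ℕ → ℝ} (h0 : ∀ n, 0 ≤ u n) (h1 : ∀ n, u n ≤ 1) :
    0 ≤ limsup u atTop :=
  le_limsup_of_frequently_le (Frequently.of_forall h0) (bdd_of_mem h0 h1).1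

lemma avg_nonneg {ι : Type*} (s : Finset ι) (g : ι → ℝ) (h0 : ∀ i, 0 ≤ g i) :
    0 ≤ (∑ j ∈ s, g j) / (s.card : ℝ) :=
  div_nonneg (Finset.sum_nonneg fun i _ => h0 i) (Nat.cast_nonneg _)

lemma avg_le_one {ι : Type*} (s : Finset ι) (g : ι → ℝ) (h1 : ∀ i, g i ≤ 1) :
    (∑ j ∈ s, g j) / (s.card : ℝ) ≤ 1 := by
  apply div_le_one_of_le₀ _ (Nat.cast_nonneg _)
  calc (∑ j ∈ s, g j) ≤ ∑ j ∈ s, (1 : ℝ) := Finset.sum_le_sum fun i _ => h1 i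
    _ = s.card := by simp

/-- for a bounded measurable `f` with `|f| ≤ 1/2` and `x, y` generic for `|f|²`:
(a) `d_f(x,y)² ≤ d'_f(x,y)`; (b) `ρ_f(x,y) < ε/2 → d'_f(x,y) < ε`;
(c) `d_f(x,y)² < ε³ → ρ_f(x,y) < ε`. -/
theorem stmt6 {d : ℕ}
    [MeasurableSpace X] (μ : Measure X) [IsProbabilityMeasure μ]
    (T : (Fin d → ℤ) → X → X)
    (hT : ∀ j, MeasurePreserving (T j) μ μ)
    (hTadd : ∀ i j, T (i + j) = T i ∘ T j)
    (f : X → ℂ) (hf : Measurable f) (hbd : ∀ x, ‖f x‖ ≤ 1 / 2)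
    (x y : X) (hx : genericSq μ T f x) (hy : genericSq μ T f y) :
    (dF T f x y) ^ 2 ≤ dF' T f x y ∧
    (∀ ε : ℝ, 0 < ε → (rhoF T f x y < ε / 2 → dF' T f x y < ε)) ∧
    (∀ ε : ℝ, 0 < ε → ((dF T f x y) ^ 2 < ε ^ 3 → rhoF T f x y < ε)) := by
  have hg0 : ∀ j, 0 ≤ ‖f (T j x) - f (T j y)‖ := fun j => norm_nonneg _
  have hg1 : ∀ j, ‖f (T j x) - f (T j y)‖ ≤ 1 := fun j => by
    have := norm_sub_le (f (T j x)) (f (T j y))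
    linarith [hbd (T j x), hbd (T j y)]
  unfold dF dF' rhoF upperDensity
  simp only [Set.mem_ofPred_eq]
  set g : (Fin d → ℤ) → ℝ := fun j => ‖f (T j x) - f (T j y)‖ with hg
  have hgj : ∀ j, ‖f (T j x) - f (T j y)‖ = g j := fun j => rfl
  simp only [hgj] at *
  clear_value g
  have hfrac : ∀ (ε : ℝ) (n : ℕ), (((Fbox d n).filter (fun j => ε < g j)).card : ℝ) =
      ∑ j ∈ Fbox d n, if ε < g j then (1 : ℝ) else 0 := fun ε n => by simp
  simp only [hfrac]
  have b0 : ∀ n, 0 ≤ (∑ j ∈ Fbox d n, g j) / ((Fbox d n).card : ℝ) :=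
    fun n => avg_nonneg _ _ hg0
  have b1 : ∀ n, (∑ j ∈ Fbox d n, g j) / ((Fbox d n).card : ℝ) ≤ 1 :=
    fun n => avg_le_one _ _ hg1
  have q0 : ∀ n, 0 ≤ (∑ j ∈ Fbox d n, g j ^ 2) / ((Fbox d n).card : ℝ) :=
    fun n => avg_nonneg _ (fun j => g j ^ 2) (fun j => sq_nonneg _)
  have qb : ∀ n, (∑ j ∈ Fbox d n, g j ^ 2) / ((Fbox d n).card : ℝ)
      ≤ (∑ j ∈ Fbox d n, g j) / ((Fbox d n).card : ℝ) := fun n => by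
    gcongr with j
    nlinarith [hg0 j, hg1 j]
  have a0 : ∀ n, 0 ≤ Real.sqrt ((∑ j ∈ Fbox d n, g j ^ 2) / ((Fbox d n).card : ℝ)) :=
    fun n => Real.sqrt_nonneg _
  have a1 : ∀ n, Real.sqrt ((∑ j ∈ Fbox d n, g j ^ 2) / ((Fbox d n).card : ℝ)) ≤ 1 :=
    fun n => Real.sqrt_le_one.2 ((qb n).trans (b1 n))
  have u0 : ∀ ε : ℝ, ∀ n, 0 ≤ (∑ j ∈ Fbox d n, if ε < g j then (1 : ℝ) else 0) /
      ((Fbox d n).card : ℝ) := fun ε n => avg_nonneg _ _ fun j => by split_ifs <;> norm_num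
  have u1 : ∀ ε : ℝ, ∀ n, (∑ j ∈ Fbox d n, if ε < g j then (1 : ℝ) else 0) /
      ((Fbox d n).card : ℝ) ≤ 1 := fun ε n => avg_le_one _ _ fun j => by split_ifs <;> norm_num
  refine ⟨?_, ?_, ?_⟩
  · apply le_of_forall_gt_imp_ge_of_dense
    intro c hc
    have hc0 : 0 ≤ c := (limsup_nonneg_aux b0 b1).trans hc.le
    have h := limsup_le_of_ev a0 a1 (c := Real.sqrt c) <| by
      filter_upwards [ev_lt_of_limsup b0 b1 hc] with n hn
      exact Real.sqrt_le_sqrt ((qb n).trans hn.le)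
    calc _ ≤ Real.sqrt c ^ 2 := pow_le_pow_left₀ (limsup_nonneg_aux a0 a1) h 2
      _ = c := Real.sq_sqrt hc0
  · intro ε hε h
    obtain ⟨δ, ⟨hδ0, hδ⟩, hδε⟩ := exists_lt_of_csInf_lt (by
      refine ⟨1, one_pos, ?_⟩
      have : ∀ j, ¬ (1 < g j) := fun j => not_lt.2 (hg1 j)
      simp [this]) h
    refine lt_of_le_of_lt (limsup_le_of_ev b0 b1 (c := 2 * δ) ?_) (by linarith)
    filter_upwards [ev_lt_of_limsup (u0 δ) (u1 δ) hδ] with n hn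
    have h1 : (∑ j ∈ Fbox d n, g j) / ((Fbox d n).card : ℝ) ≤
        (∑ j ∈ Fbox d n, (δ + if δ < g j then (1 : ℝ) else 0)) / ((Fbox d n).card : ℝ) := by
      gcongr with j
      split_ifs with hj
      · linarith [hg1 j]
      · linarith
    rw [Finset.sum_add_distrib, add_div] at h1
    have h2 : (∑ j ∈ Fbox d n, δ) / ((Fbox d n).card : ℝ) ≤ δ := by
      apply div_le_of_le_mul₀ (Nat.cast_nonneg _) hδ0.le
      simp [mul_comm]
    linarith
  · intro ε hε h
    have hD := limsup_nonneg_aux a0 a1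
    obtain ⟨s, hs1, hs2⟩ := exists_between (Real.lt_sqrt_of_sq_lt h)
    have hs0 : 0 < s := lt_of_le_of_lt hD hs1
    have hs3 : s ^ 2 < ε ^ 3 := (Real.lt_sqrt hs0.le).1 hs2
    have hr : ((s ^ 2) ^ ((1 : ℝ) / 3)) ^ 3 = s ^ 2 := by
      rw [← Real.rpow_natCast, ← Real.rpow_mul (by positivity)]
      norm_num
    have hr0 : 0 ≤ (s ^ 2) ^ ((1 : ℝ) / 3) := by positivity
    have hrε : (s ^ 2) ^ ((1 : ℝ) / 3) < ε := by
      apply lt_of_pow_lt_pow_left₀ 3 hε.le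
      rwa [hr]
    obtain ⟨δ, hδ1, hδ2⟩ := exists_between hrε
    have hδ0 : 0 < δ := lt_of_le_of_lt hr0 hδ1
    have hsδ : s ^ 2 < δ ^ 3 := by
      rw [← hr]
      exact pow_lt_pow_left₀ hδ1 hr0 (by norm_num)
    refine lt_of_le_of_lt (csInf_le ⟨0, fun a ha => ha.1.le⟩ ⟨hδ0, ?_⟩) hδ2
    refine lt_of_le_of_lt (limsup_le_of_ev (u0 δ) (u1 δ) (c := s ^ 2 / δ ^ 2) ?_) ?_
    · filter_upwards [ev_lt_of_limsup a0 a1 hs1] with n hn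
      have hn2 := (Real.sqrt_lt' hs0).1 hn
      rw [le_div_iff₀ (by positivity), div_mul_eq_mul_div, Finset.sum_mul]
      refine le_trans ?_ hn2.le
      gcongr with j
      split_ifs with hj
      · rw [one_mul]
        gcongr
      · rw [zero_mul]
        positivity
    · rw [div_lt_iff₀ (by positivity)]
      linarith [pow_succ' δ 2]
end
end

section
/- Let (X,T) be a transitive topological dynamical system given by a continuous ℤ^d-action on a compact metric space and let f ∈ C(X). Then (X,T) is either f-almost mean equicontinuous or f-mean sensitive. -/
open MeasureTheory Filter Finset Metric
open scoped Classical

noncomputable section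

variable {X : Type*}

lemma shift_count (d n K : ℕ) (j : Fin d → ℤ) (hj : ∀ k, |j k| ≤ K) (hn : 2 * K ≤ n)
    (S : Set (Fin d → ℤ)) :
    ((Fbox d n).filter (fun i => i + j ∈ S)).card + (n - 2 * K) ^ d
      ≤ ((Fbox d n).filter (fun i => i ∈ S)).card + n ^ d := by
  let M : Finset (Fin d → ℤ) :=
    Fintype.piFinset fun _ => Finset.Icc (K : ℤ) ((n : ℤ) - 1 - K)
  have hM : M.card = (n - 2 * K) ^ d := by
    simp only [M, Fintype.card_piFinset, Int.card_Icc, Finset.prod_const, Finset.card_univ,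
      Fintype.card_fin]
    congr 1
    omega
  let A := (Fbox d n).image (fun i => i + j)
  have hinj : Function.Injective (fun i : Fin d → ℤ => i + j) := add_left_injective j
  have hA : A.card = n ^ d := by
    rw [Finset.card_image_of_injective _ hinj, Fbox_card]
  have hMA : M ⊆ A := by
    intro x hx
    simp only [M, Fintype.mem_piFinset, Finset.mem_Icc] at hx
    refine Finset.mem_image.2 ⟨x - j, ?_, by simp⟩
    simp only [Fbox, Fintype.mem_piFinset, Finset.mem_Icc, Pi.sub_apply]
    intro k
    have h1 := abs_le.1 (hj k)
    have h2 := hx k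
    constructor <;> omega
  have hMF : M ⊆ Fbox d n := by
    intro x hx
    simp only [M, Fintype.mem_piFinset, Finset.mem_Icc] at hx
    simp only [Fbox, Fintype.mem_piFinset, Finset.mem_Icc]
    intro k
    have h2 := hx k
    constructor <;> omega
  have h1 : ((Fbox d n).filter (fun i => i + j ∈ S)).card = (A.filter (fun i => i ∈ S)).card := by
    rw [Finset.filter_image, Finset.card_image_of_injective _ hinj]
  have h2 : A.filter (fun i => i ∈ S) ⊆ (Fbox d n).filter (fun i => i ∈ S) ∪ (A \ M) := by
    intro x hx
    rw [Finset.mem_filter] at hx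
    by_cases hxm : x ∈ M
    · exact Finset.mem_union_left _ (Finset.mem_filter.2 ⟨hMF hxm, hx.2⟩)
    · exact Finset.mem_union_right _ (Finset.mem_sdiff.2 ⟨hx.1, hxm⟩)
  have h3 := (Finset.card_le_card h2).trans (Finset.card_union_le _ _)
  have h4 := Finset.card_sdiff_add_card_eq_card hMA
  omega

lemma ratio_bdd (d : ℕ) (S : Set (Fin d → ℤ)) (n : ℕ) :
    0 ≤ (((Fbox d n).filter (fun j => j ∈ S)).card : ℝ) / ((Fbox d n).card : ℝ) ∧
    (((Fbox d n).filter (fun j => j ∈ S)).card : ℝ) / ((Fbox d n).card : ℝ) ≤ 1 := by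
  refine ⟨by positivity, div_le_one_of_le₀ ?_ (by positivity)⟩
  exact_mod_cast Finset.card_filter_le _ _

lemma upperDensity_shift_le (d : ℕ) (j : Fin d → ℤ) (S : Set (Fin d → ℤ)) :
    upperDensity d {i | i + j ∈ S} ≤ upperDensity d S := by
  obtain ⟨K, hK⟩ : ∃ K : ℕ, ∀ k, |j k| ≤ K := by
    refine ⟨∑ k, (j k).natAbs, fun k => ?_⟩
    rw [Int.abs_eq_natAbs]
    exact_mod_cast Finset.single_le_sum (f := fun k => (j k).natAbs) (fun _ _ => Nat.zero_le _)
      (Finset.mem_univ k)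
  have hlim : Tendsto (fun n : ℕ => (1 - (2 * K : ℝ) / n) ^ d) atTop (nhds 1) := by
    have := ((tendsto_const_div_atTop_nhds_zero_nat (2 * K : ℝ)).const_sub 1).pow d
    simpa using this
  refine le_of_forall_pos_le_add fun ε hε => ?_
  unfold upperDensity
  have hb : ∀ R : Set (Fin d → ℤ), IsBoundedUnder (· ≤ ·) atTop (fun n : ℕ =>
      (((Fbox d n).filter (fun j => j ∈ R)).card : ℝ) / ((Fbox d n).card : ℝ)) := fun R =>
    isBoundedUnder_of ⟨1, fun n => (ratio_bdd d R n).2⟩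
  have hc : ∀ R : Set (Fin d → ℤ), IsBoundedUnder (· ≥ ·) atTop (fun n : ℕ =>
      (((Fbox d n).filter (fun j => j ∈ R)).card : ℝ) / ((Fbox d n).card : ℝ)) := fun R =>
    isBoundedUnder_of ⟨0, fun n => (ratio_bdd d R n).1⟩
  rw [← limsup_add_const atTop _ ε (hb S) (hc S).isCoboundedUnder_le]
  refine limsup_le_limsup ?_ (hc _).isCoboundedUnder_le
    (isBoundedUnder_of ⟨1 + ε, fun n => by
      have := (ratio_bdd d S n).2
      linarith⟩)
  filter_upwards [hlim.eventually (lt_mem_nhds (show 1 - ε < 1 by linarith)),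
    eventually_ge_atTop (2 * K), eventually_ge_atTop 1] with n h1 h2 h3
  have h4 := shift_count d n K j hK h2 S
  have hn : (0 : ℝ) < n := by exact_mod_cast h3
  have h5 : (((Fbox d n).filter (fun i => i + j ∈ S)).card : ℝ) + ((n : ℝ) - 2 * K) ^ d
      ≤ ((Fbox d n).filter (fun i => i ∈ S)).card + (n : ℝ) ^ d := by
    have : (((n - 2 * K : ℕ)) : ℝ) = (n : ℝ) - 2 * K := by push_cast [Nat.cast_sub h2]; ring
    rw [← this]
    exact_mod_cast h4
  have h6 : (1 - (2 * K : ℝ) / n) ^ d * (n : ℝ) ^ d = ((n : ℝ) - 2 * K) ^ d := by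
    rw [← mul_pow]
    congr 1
    field_simp
  have hnd : (0 : ℝ) < (n : ℝ) ^ d := by positivity
  simp only [Set.mem_setOf_eq, Fbox_card]
  push_cast
  rw [div_add' _ _ _ hnd.ne', div_le_div_iff_of_pos_right hnd]
  nlinarith

lemma upperDensity_shift (d : ℕ) (j : Fin d → ℤ) (S : Set (Fin d → ℤ)) :
    upperDensity d {i | i + j ∈ S} = upperDensity d S := by
  refine le_antisymm (upperDensity_shift_le d j S) ?_
  have := upperDensity_shift_le d (-j) {i | i + j ∈ S}
  simpa using this

lemma rhoF_shift {X : Type*} {d : ℕ} (T : (Fin d → ℤ) → X → X)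
    (hTadd : ∀ i j, T (i + j) = T i ∘ T j) (f : X → ℂ) (j : Fin d → ℤ) (x y : X) :
    rhoF T f (T j x) (T j y) = rhoF T f x y := by
  unfold rhoF
  congr 1
  ext ε
  have := upperDensity_shift d j {i | ε < ‖f (T i x) - f (T i y)‖}
  simp only [Set.mem_setOf_eq, hTadd, Function.comp_apply] at this
  simp only [Set.mem_setOf_eq, this]

/-- a transitive TDS is either `f`-almost mean equicontinuous or
`f`-mean sensitive. -/
theorem stmt10 {d : ℕ}
    [MetricSpace X] [CompactSpace X]
    (T : (Fin d → ℤ) → X → X)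
    (hTc : ∀ j, Continuous (T j))
    (hTadd : ∀ i j, T (i + j) = T i ∘ T j)
    (htrans : {x : X | Dense (Set.range fun j : Fin d → ℤ => T j x)} ∈ residual X)
    (f : X → ℂ) (hf : Continuous f) :
    ({x : X | ∀ ε : ℝ, 0 < ε → ∃ δ : ℝ, 0 < δ ∧
        ∀ y : X, dist x y ≤ δ → rhoF T f x y ≤ ε} ∈ residual X) ∨
    (∃ ε : ℝ, 0 < ε ∧ ∀ U : Set X, IsOpen U → U.Nonempty →
        ∃ x ∈ U, ∃ y ∈ U, ε < rhoF T f x y) := by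
  by_cases h : ∀ ε : ℝ, 0 < ε → ∃ U : Set X, IsOpen U ∧ U.Nonempty ∧
      ∀ x ∈ U, ∀ y ∈ U, rhoF T f x y ≤ ε
  · left
    refine mem_of_superset htrans fun x hx ε hε => ?_
    obtain ⟨U, hU, hne, hr⟩ := h ε hε
    obtain ⟨_, hzU, j, rfl⟩ := hx.inter_open_nonempty U hU hne
    obtain ⟨δ, hδ, hball⟩ := Metric.isOpen_iff.1 (hU.preimage (hTc j)) x hzU
    refine ⟨δ / 2, by positivity, fun y hy => ?_⟩
    rw [← rhoF_shift T hTadd f j]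
    refine hr _ hzU _ (hball ?_)
    rw [Metric.mem_ball, dist_comm]
    linarith
  · right
    push Not at h
    obtain ⟨ε, hε, h⟩ := h
    exact ⟨ε, hε, h⟩
end
end

section
/- Let (X,T) be a topological dynamical system given by a continuous ℤ^d-action on a compact metric space. Then (X,T) is mean equicontinuous if and only if it is f-mean equicontinuous for every f ∈ C(X). -/
open MeasureTheory Filter Finset Metric
open scoped Classical

noncomputable section

variable {X : Type*}

/-- The Besicovitch pseudometric `d_b(x,y) = limsup_n (1/|F_n|) Σ_{j∈F_n} d(T^j x, T^j y)`. -/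
def dB {d : ℕ} [PseudoMetricSpace X] (T : (Fin d → ℤ) → X → X) (x y : X) : ℝ :=
  Filter.limsup (fun n : ℕ =>
    (∑ j ∈ Fbox d n, dist (T j x) (T j y)) / ((Fbox d n).card : ℝ)) Filter.atTop

/-- Average over the box. -/
def avgBox (d : ℕ) (g : (Fin d → ℤ) → ℝ) (n : ℕ) : ℝ :=
  (∑ j ∈ Fbox d n, g j) / ((Fbox d n).card : ℝ)

lemma avgBox_nonneg {d : ℕ} {g : (Fin d → ℤ) → ℝ} (hg : ∀ j, 0 ≤ g j) (n : ℕ) :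
    0 ≤ avgBox d g n :=
  div_nonneg (Finset.sum_nonneg fun j _ => hg j) (Nat.cast_nonneg _)

lemma avgBox_mono {d : ℕ} {g h : (Fin d → ℤ) → ℝ} (hg : ∀ j, g j ≤ h j) (n : ℕ) :
    avgBox d g n ≤ avgBox d h n :=
  div_le_div_of_nonneg_right (Finset.sum_le_sum fun j _ => hg j) (Nat.cast_nonneg _)

lemma avgBox_const_le {d : ℕ} {c : ℝ} (hc : 0 ≤ c) (n : ℕ) :
    avgBox d (fun _ => c) n ≤ c := by
  unfold avgBox
  rw [Finset.sum_const, nsmul_eq_mul]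
  exact div_le_of_le_mul₀ (Nat.cast_nonneg _) hc (by rw [mul_comm])

lemma avgBox_affine {d : ℕ} {g h : (Fin d → ℤ) → ℝ} {c C : ℝ} (hc : 0 ≤ c)
    (hg : ∀ j, g j ≤ c + C * h j) (n : ℕ) :
    avgBox d g n ≤ c + C * avgBox d h n := by
  refine (avgBox_mono hg n).trans ?_
  have h1 : avgBox d (fun j => c + C * h j) n
      = avgBox d (fun _ => c) n + C * avgBox d h n := by
    unfold avgBox
    rw [Finset.sum_add_distrib, ← Finset.mul_sum, add_div, mul_div_assoc]
  rw [h1]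
  linarith [avgBox_const_le (d := d) hc n]

lemma avgBox_sum {d : ℕ} {ι : Type*} (s : Finset ι) (g : ι → (Fin d → ℤ) → ℝ) (n : ℕ) :
    avgBox d (fun j => ∑ i ∈ s, g i j) n = ∑ i ∈ s, avgBox d (g i) n := by
  unfold avgBox
  rw [Finset.sum_comm, Finset.sum_div]

lemma limsup_le_aux {u : ℕ → ℝ} {a : ℝ} (h0 : ∀ n, 0 ≤ u n) (h : ∀ᶠ n in atTop, u n ≤ a) :
    limsup u atTop ≤ a :=
  Filter.limsup_le_of_le
    (Filter.IsBoundedUnder.isCoboundedUnder_le (Filter.isBoundedUnder_of ⟨0, h0⟩)) h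

lemma eventually_aux {u : ℕ → ℝ} {a b : ℝ} (hb : ∀ n, u n ≤ b) (h : limsup u atTop < a) :
    ∀ᶠ n in atTop, u n < a :=
  Filter.eventually_lt_of_limsup_lt h (Filter.isBoundedUnder_of ⟨b, hb⟩)

lemma exists_dist_bound [MetricSpace X] [CompactSpace X] :
    ∃ D : ℝ, 0 ≤ D ∧ ∀ a b : X, dist a b ≤ D :=
  ⟨Metric.diam (Set.univ : Set X), Metric.diam_nonneg, fun a b =>
    Metric.dist_le_diam_of_mem isCompact_univ.isBounded (Set.mem_univ a) (Set.mem_univ b)⟩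

lemma exists_norm_bound [MetricSpace X] [CompactSpace X] {f : X → ℂ} (hf : Continuous f) :
    ∃ M : ℝ, 0 < M ∧ ∀ a b : X, ‖f a - f b‖ ^ 2 ≤ M := by
  obtain ⟨K, hK⟩ := isCompact_univ.exists_bound_of_continuousOn
    (f := fun p : X × X => ‖f p.1 - f p.2‖ ^ 2) (by fun_prop)
  refine ⟨max K 1, lt_of_lt_of_le one_pos (le_max_right _ _), fun a b => ?_⟩
  exact (le_abs_self _).trans ((hK (a, b) (Set.mem_univ _)).trans (le_max_left _ _))

lemma forward_bound [MetricSpace X] [CompactSpace X] {f : X → ℂ} (hf : Continuous f)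
    {η : ℝ} (hη : 0 < η) :
    ∃ C : ℝ, 0 < C ∧ ∀ a b : X, ‖f a - f b‖ ^ 2 ≤ η + C * dist a b := by
  obtain ⟨M, hM, hMb⟩ := exists_norm_bound hf
  have huc := CompactSpace.uniformContinuous_of_continuous hf
  obtain ⟨δ, hδ, h⟩ := Metric.uniformContinuous_iff.1 huc (Real.sqrt η) (Real.sqrt_pos.2 hη)
  refine ⟨M / δ, div_pos hM hδ, fun a b => ?_⟩
  by_cases hab : dist a b < δ
  · have h1 := h hab
    rw [dist_eq_norm] at h1
    have h2 : ‖f a - f b‖ ^ 2 ≤ η := by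
      have := pow_le_pow_left₀ (norm_nonneg _) h1.le 2
      rwa [Real.sq_sqrt hη.le] at this
    have : 0 ≤ M / δ * dist a b := by positivity
    linarith
  · push Not at hab
    have h1 : M ≤ M / δ * dist a b := by
      calc M = M / δ * δ := by field_simp
        _ ≤ _ := by gcongr
    linarith [hMb a b]

lemma backward_bound [MetricSpace X] [CompactSpace X] {η : ℝ} (hη : 0 < η) :
    ∃ (s : Finset X), ∀ a b : X, dist a b ≤
      3 * η + (1 / η) * ∑ p ∈ s, ‖((dist a p : ℝ) : ℂ) - ((dist b p : ℝ) : ℂ)‖ ^ 2 := by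
  obtain ⟨t, -, htf, hcov⟩ := Metric.totallyBounded_iff.1
    (isCompact_univ (X := X)).totallyBounded η hη |>.imp
      (fun t ht => (⟨trivial, ht.1, ht.2⟩ : True ∧ t.Finite ∧ _))
  refine ⟨htf.toFinset, fun a b => ?_⟩
  obtain ⟨p, hp, hap⟩ := Set.mem_iUnion₂.1 (hcov (Set.mem_univ a))
  rw [Metric.mem_ball] at hap
  have h1 : ‖((dist a p : ℝ) : ℂ) - ((dist b p : ℝ) : ℂ)‖ ^ 2 ≤
      ∑ p ∈ htf.toFinset, ‖((dist a p : ℝ) : ℂ) - ((dist b p : ℝ) : ℂ)‖ ^ 2 :=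
    Finset.single_le_sum
      (f := fun p => ‖((dist a p : ℝ) : ℂ) - ((dist b p : ℝ) : ℂ)‖ ^ 2)
      (fun i _ => by positivity) (htf.mem_toFinset.2 hp)
  have h2 : ‖((dist a p : ℝ) : ℂ) - ((dist b p : ℝ) : ℂ)‖ = |dist a p - dist b p| := by
    rw [← Complex.ofReal_sub, Complex.norm_real, Real.norm_eq_abs]
  set S := ∑ p ∈ htf.toFinset, ‖((dist a p : ℝ) : ℂ) - ((dist b p : ℝ) : ℂ)‖ ^ 2
  rw [h2] at h1
  set t := |dist a p - dist b p|
  have h3 : t ≤ η + (1 / η) * t ^ 2 := by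
    have : η + (1 / η) * t ^ 2 - t = ((η - t) ^ 2 + η * t) / η := by field_simp; ring
    have h4 : 0 ≤ ((η - t) ^ 2 + η * t) / η := by
      have : 0 ≤ t := abs_nonneg _
      positivity
    linarith
  have h4 : (1 / η) * t ^ 2 ≤ (1 / η) * S := by gcongr
  have h5 : dist a b ≤ dist a p + dist b p := dist_triangle_right a b p
  have h6 : dist b p - dist a p ≤ t := by
    have := neg_le_abs (dist a p - dist b p)
    linarith
  linarith

/-- a TDS is mean equicontinuous iff it is `f`-mean equicontinuous for
every `f ∈ C(X)`. -/
theorem stmt12 {d : ℕ}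
    [MetricSpace X] [CompactSpace X]
    (T : (Fin d → ℤ) → X → X)
    (hTc : ∀ j, Continuous (T j))
    (hTadd : ∀ i j, T (i + j) = T i ∘ T j) :
    (∀ x : X, ∀ ε : ℝ, 0 < ε → ∃ δ : ℝ, 0 < δ ∧
        ∀ y : X, dist x y ≤ δ → dB T x y < ε) ↔
    (∀ f : X → ℂ, Continuous f →
      ∀ x : X, ∀ ε : ℝ, 0 < ε → ∃ δ : ℝ, 0 < δ ∧
        ∀ y : X, dist x y ≤ δ → dF T f x y ≤ ε) := by
  constructor
  · intro H f hf x ε hε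
    obtain ⟨C, hC, hCb⟩ := forward_bound hf (η := ε ^ 2 / 2) (by positivity)
    obtain ⟨D, -, hDb⟩ := exists_dist_bound (X := X)
    obtain ⟨δ, hδ, h⟩ := H x (ε ^ 2 / 2 / C) (by positivity)
    refine ⟨δ, hδ, fun y hy => limsup_le_aux (fun n => Real.sqrt_nonneg _) ?_⟩
    have hD0 : 0 ≤ D := dist_nonneg.trans (hDb x x)
    have hev := eventually_aux (u := avgBox d fun j => dist (T j x) (T j y)) (b := D)
      (fun n => (avgBox_mono (fun j => hDb _ _) n).trans (avgBox_const_le hD0 n)) (h y hy)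
    filter_upwards [hev] with n hn
    apply Real.sqrt_le_iff.2 ⟨hε.le, ?_⟩
    have h1 := avgBox_affine (d := d) (g := fun j => ‖f (T j x) - f (T j y)‖ ^ 2)
      (h := fun j => dist (T j x) (T j y)) (by positivity) (fun j => hCb _ _) n
    rw [lt_div_iff₀ hC] at hn
    change avgBox d (fun j => ‖f (T j x) - f (T j y)‖ ^ 2) n ≤ ε ^ 2
    linarith
  · intro H x ε hε
    set η := ε / 8 with hηdef
    have hη : 0 < η := by positivity
    obtain ⟨s, hs⟩ := backward_bound (X := X) hη
    set κ : ℝ := Real.sqrt (η ^ 2 / (s.card + 1)) with hκdef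
    have hκ : 0 < κ := Real.sqrt_pos.2 (by positivity)
    have hfc : ∀ p : X, Continuous (fun z : X => ((dist z p : ℝ) : ℂ)) := fun p => by fun_prop
    choose δ hδ hδb using fun p : X => H _ (hfc p) x (κ / 2) (by positivity)
    have hδ' : ∃ δ' : ℝ, 0 < δ' ∧ ∀ p ∈ s, δ' ≤ δ p := by
      rcases s.eq_empty_or_nonempty with h | h
      · exact ⟨1, one_pos, by simp [h]⟩
      · exact ⟨s.inf' h δ, (Finset.lt_inf'_iff h).2 fun p _ => hδ p,
          fun p hp => Finset.inf'_le _ hp⟩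
    obtain ⟨δ', hδ'0, hδ'b⟩ := hδ'
    refine ⟨δ', hδ'0, fun y hy => lt_of_le_of_lt (b := 4 * η) ?_ (by linarith)⟩
    refine limsup_le_aux (avgBox_nonneg fun j => dist_nonneg) ?_
    have hev : ∀ᶠ n in atTop, ∀ p ∈ s,
        avgBox d (fun j => ‖((dist (T j x) p : ℝ) : ℂ) - ((dist (T j y) p : ℝ) : ℂ)‖ ^ 2) n
          ≤ η ^ 2 / (s.card + 1) := by
      rw [Filter.eventually_all_finset]
      intro p hp
      obtain ⟨M, hM, hMb⟩ := exists_norm_bound (hfc p)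
      have h1 := hδb p y (hy.trans (hδ'b p hp))
      have h2 := eventually_aux (a := κ) (b := Real.sqrt M) (u := fun n => Real.sqrt (avgBox d
        (fun j => ‖((dist (T j x) p : ℝ) : ℂ) - ((dist (T j y) p : ℝ) : ℂ)‖ ^ 2) n))
        (fun n => Real.sqrt_le_sqrt
          ((avgBox_mono (fun j => hMb _ _) n).trans (avgBox_const_le hM.le n)))
        (lt_of_le_of_lt h1 (by linarith))
      filter_upwards [h2] with n hn
      exact (Real.sqrt_le_sqrt_iff (by positivity)).1 hn.le
    filter_upwards [hev] with n hn
    have h1 := avgBox_affine (d := d) (g := fun j => dist (T j x) (T j y))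
      (by positivity) (fun j => hs (T j x) (T j y)) n
    rw [avgBox_sum] at h1
    have h2 := Finset.sum_le_card_nsmul s _ _ hn
    rw [nsmul_eq_mul] at h2
    have h3 : (s.card : ℝ) * (η ^ 2 / (s.card + 1)) ≤ η ^ 2 := by
      rw [mul_div_assoc', div_le_iff₀ (by positivity)]
      nlinarith [sq_nonneg η]
    have h4 := mul_le_mul_of_nonneg_left (h2.trans h3) (by positivity : 0 ≤ 1 / η)
    have h5 : 1 / η * η ^ 2 = η := by field_simp
    change avgBox d (fun j => dist (T j x) (T j y)) n ≤ 4 * η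
    linarith
end
end

section
/- Let (X,T) be a topological dynamical system given by a continuous ℤ^d-action on a compact metric space and let f ∈ C(X). If f is almost periodic (the orbit {f∘T^j : j ∈ ℤ^d} is precompact in C(X) with the supremum norm), then f is mean equicontinuous. -/
open MeasureTheory Filter Finset Metric
open scoped Classical

noncomputable section

variable {X : Type*}

/-- if `f ∈ C(X)` is almost periodic (its orbit under the Koopman action is
precompact in the sup norm), then `f` is mean equicontinuous. -/
theorem stmt13 {d : ℕ}
    [MetricSpace X] [CompactSpace X]
    (T : (Fin d → ℤ) → X → X)
    (hTc : ∀ j, Continuous (T j))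
    (hTadd : ∀ i j, T (i + j) = T i ∘ T j)
    (f : X → ℂ) (hf : Continuous f)
    (hap : IsCompact (closure (Set.range fun j : Fin d → ℤ =>
      (ContinuousMap.mk (f ∘ T j) (hf.comp (hTc j)) : C(X, ℂ))))) :
    ∀ x : X, ∀ ε : ℝ, 0 < ε → ∃ δ : ℝ, 0 < δ ∧
      ∀ y : X, dist x y ≤ δ → dF T f x y ≤ ε := by
  intro x ε hε
  obtain ⟨t, htf, ht⟩ := Metric.totallyBounded_iff.1 hap.totallyBounded (ε / 3) (by positivity)
  have hev : ∀ᶠ y in nhds x, ∀ g ∈ t, dist (g y) (g x) < ε / 3 := by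
    rw [Filter.eventually_all_finite htf]
    intro g _
    exact Metric.tendsto_nhds.1 (g.continuous.tendsto x) (ε / 3) (by positivity)
  obtain ⟨δ, hδ, hball⟩ := Metric.eventually_nhds_iff.1 hev
  refine ⟨δ / 2, by positivity, fun y hy => ?_⟩
  have hyx : dist y x < δ := by rw [dist_comm]; linarith
  have key : ∀ j, ‖f (T j x) - f (T j y)‖ ≤ ε := by
    intro j
    have hj := ht (subset_closure (Set.mem_range_self j))
    simp only [Set.mem_iUnion, Metric.mem_ball] at hj
    obtain ⟨g, hg, hjg⟩ := hj
    have h1 := (ContinuousMap.dist_apply_le_dist (f := _) (g := g) x).trans_lt hjg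
    have h2 := (ContinuousMap.dist_apply_le_dist (f := _) (g := g) y).trans_lt hjg
    have h3 := hball hyx g hg
    simp only [ContinuousMap.coe_mk, Function.comp_apply] at h1 h2
    rw [← dist_eq_norm]
    have h4 := dist_triangle4 (f (T j x)) (g x) (g y) (f (T j y))
    rw [dist_comm (g x), dist_comm (g y) (f (T j y))] at h4
    linarith
  unfold dF
  refine Filter.limsup_le_of_le ?_ (Filter.Eventually.of_forall fun n => ?_)
  · exact Filter.isCoboundedUnder_le_of_le Filter.atTop (x := 0) fun n => Real.sqrt_nonneg _
  · refine Real.sqrt_le_iff.2 ⟨hε.le, ?_⟩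
    refine div_le_of_le_mul₀ (by positivity) (by positivity) ?_
    calc ∑ j ∈ Fbox d n, ‖f (T j x) - f (T j y)‖ ^ 2
        ≤ ∑ j ∈ Fbox d n, ε ^ 2 :=
          Finset.sum_le_sum fun j _ => pow_le_pow_left₀ (norm_nonneg _) (key j) 2
      _ = ε ^ 2 * ((Fbox d n).card : ℝ) := by
          rw [Finset.sum_const, nsmul_eq_mul, mul_comm]
end
end

section
/- Let (X,T) be a uniquely ergodic topological dynamical system given by a continuous ℕ^d-action on a compact metric space and let f ∈ C(X). If f is weakly almost periodic (the orbit {f∘T^j : j ∈ ℕ^d} is precompact in C(X) with respect to the weak topology), then f is mean equicontinuous. -/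
open MeasureTheory Filter Finset Metric
open scoped Classical

noncomputable section

/-- The box `{0,…,n−1}^d` inside `ℕ^d`. -/
def FboxN (d n : ℕ) : Finset (Fin d → ℕ) :=
  Fintype.piFinset fun _ => Finset.range n

variable {X : Type*}

/-- The pseudometric `d_f` for an `ℕ^d`-action. -/
def dFN {d : ℕ} (T : (Fin d → ℕ) → X → X) (f : X → ℂ) (x y : X) : ℝ :=
  Filter.limsup (fun n : ℕ =>
    Real.sqrt ((∑ j ∈ FboxN d n, ‖f (T j x) - f (T j y)‖ ^ 2) / ((FboxN d n).card : ℝ)))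
    Filter.atTop


/-- Box averages. -/
def avgN {d : ℕ} (n : ℕ) (a : (Fin d → ℕ) → ℝ) : ℝ :=
  (∑ j ∈ FboxN d n, a j) / ((FboxN d n).card : ℝ)

lemma FboxN_card (d n : ℕ) : (FboxN d n).card = n ^ d := by
  simp [FboxN]

open Topology in
lemma exists_subseq_measure {d : ℕ} {Z : Type*} [TopologicalSpace Z] [CompactSpace Z]
    [TopologicalSpace.MetrizableSpace Z] [MeasurableSpace Z] [BorelSpace Z]
    (z : (Fin d → ℕ) → Z) (ns : ℕ → ℕ) (hns : Tendsto ns atTop atTop) :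
    ∃ (μ : Measure Z) (ms : ℕ → ℕ), IsProbabilityMeasure μ ∧ StrictMono ms ∧
      ∀ φ : Z → ℝ, Continuous φ →
        Tendsto (fun k => avgN (ns (ms k)) (fun j => φ (z j))) atTop (𝓝 (∫ w, φ w ∂μ)) := by
  letI : MetricSpace Z := TopologicalSpace.metrizableSpaceMetric Z
  have hex : ∀ n : ℕ, ∃ P : ProbabilityMeasure Z, 0 < n → ∀ φ : Z → ℝ, Continuous φ →
      ∫ w, φ w ∂(P : Measure Z) = avgN n (fun j => φ (z j)) := by
    intro n
    rcases Nat.eq_zero_or_pos n with h | h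
    · exact ⟨⟨Measure.dirac (z 0), inferInstance⟩, fun h' => by omega⟩
    · have hc : (FboxN d n).card ≠ 0 := by
        rw [FboxN_card]; positivity
      refine ⟨⟨((FboxN d n).card : ENNReal)⁻¹ • ∑ j ∈ FboxN d n, Measure.dirac (z j), ⟨?_⟩⟩, ?_⟩
      · simp only [Measure.smul_apply, Measure.finsetSum_apply, measure_univ, smul_eq_mul,
          Finset.sum_const, nsmul_eq_mul, mul_one]
        exact ENNReal.inv_mul_cancel (by exact_mod_cast hc) (by simp)
      · intro _ φ hφ
        simp only [ProbabilityMeasure.coe_mk]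
        rw [integral_smul_measure, integral_finsetSum_measure]
        · simp only [integral_dirac, avgN, smul_eq_mul, ENNReal.toReal_inv, ENNReal.toReal_natCast]
          rw [div_eq_inv_mul]
        · intro i _
          exact integrable_dirac (by simp)
  choose P hP using hex
  obtain ⟨μ, ms, hms, hlim⟩ := CompactSpace.tendsto_subseq (fun k => P (ns k))
  refine ⟨μ, ms, inferInstance, hms, fun φ hφ => ?_⟩
  have h1 := (ProbabilityMeasure.tendsto_iff_forall_integral_tendsto.1 hlim)
    (BoundedContinuousFunction.mkOfCompact ⟨φ, hφ⟩)
  refine Tendsto.congr' ?_ h1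
  have h2 := (hns.comp hms.tendsto_atTop).eventually_gt_atTop 0
  filter_upwards [h2] with k hk
  exact hP _ hk φ hφ

open Topology in
lemma avgN_shift {d : ℕ} (a : (Fin d → ℕ) → ℝ) (M : ℝ) (hM : ∀ j, |a j| ≤ M) (i : Fin d → ℕ) :
    Tendsto (fun n => avgN n (fun j => a (j + i)) - avgN n a) atTop (𝓝 0) := by
  have hM0 : 0 ≤ M := (abs_nonneg _).trans (hM 0)
  have key : ∀ n : ℕ, |avgN n (fun j => a (j + i)) - avgN n a| ≤
      2 * M * ((n ^ d : ℕ) - ((∏ k, (n - i k) : ℕ) : ℝ)) / ((n ^ d : ℕ) : ℝ) := by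
    intro n
    set C : Finset (Fin d → ℕ) := Fintype.piFinset fun k => Finset.Ico (i k) n with hC
    have hCc : C.card = ∏ k, (n - i k) := by simp [hC]
    have gen : ∀ B : Finset (Fin d → ℕ), C ⊆ B → B.card = n ^ d →
        |∑ j ∈ B, a j - ∑ j ∈ C, a j| ≤ M * ((n ^ d : ℕ) - ((∏ k, (n - i k) : ℕ) : ℝ)) := by
      intro B hB hBc
      rw [← Finset.sum_sdiff hB, add_sub_cancel_right]
      refine (Finset.abs_sum_le_sum_abs _ _).trans ?_
      refine (Finset.sum_le_card_nsmul _ _ M (fun j _ => hM j)).trans ?_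
      rw [Finset.card_sdiff_of_subset hB, nsmul_eq_mul, Nat.cast_sub (Finset.card_le_card hB),
        hBc, hCc, mul_comm]
    have h1 := gen (FboxN d n) (by
      intro j hj
      simp only [hC, FboxN, Fintype.mem_piFinset, Finset.mem_Ico, Finset.mem_range] at hj ⊢
      exact fun k => (hj k).2) (FboxN_card d n)
    have h2 := gen ((FboxN d n).map (addRightEmbedding i)) (by
      intro j hj
      simp only [hC, FboxN, Fintype.mem_piFinset, Finset.mem_Ico, Finset.mem_range,
        Finset.mem_map, addRightEmbedding_apply] at hj ⊢
      refine ⟨j - i, fun k => ?_, ?_⟩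
      · have := hj k; simp only [Pi.sub_apply]; omega
      · funext k; have := hj k; simp only [Pi.add_apply, Pi.sub_apply]; omega)
      (by rw [Finset.card_map, FboxN_card])
    rw [Finset.sum_map] at h2
    simp only [addRightEmbedding_apply] at h2
    unfold avgN
    rw [← sub_div, abs_div, FboxN_card, Nat.abs_cast]
    gcongr
    rw [abs_le] at *
    constructor <;> linarith [h1.1, h1.2, h2.1, h2.2]
  have hlim : Tendsto (fun n : ℕ =>
      2 * M * ((n ^ d : ℕ) - ((∏ k, (n - i k) : ℕ) : ℝ)) / ((n ^ d : ℕ) : ℝ)) atTop (𝓝 0) := by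
    have h1 : ∀ k : Fin d, Tendsto (fun n : ℕ => ((n - i k : ℕ) : ℝ) / (n : ℝ)) atTop (𝓝 1) := by
      intro k
      have h0 : Tendsto (fun n : ℕ => 1 - (i k : ℝ) / (n : ℝ)) atTop (𝓝 (1 - 0)) :=
        tendsto_const_nhds.sub (tendsto_const_div_atTop_nhds_zero_nat _)
      rw [sub_zero] at h0
      refine h0.congr' ?_
      filter_upwards [eventually_ge_atTop (i k), eventually_gt_atTop 0] with n hn hn0
      have : (n : ℝ) ≠ 0 := by positivity
      rw [Nat.cast_sub hn, sub_div, div_self this]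
    have h2 : Tendsto (fun n : ℕ => ∏ k : Fin d, ((n - i k : ℕ) : ℝ) / (n : ℝ)) atTop (𝓝 1) := by
      have := tendsto_finsetProd (Finset.univ : Finset (Fin d)) (fun k _ => h1 k)
      simpa using this
    have h3 : Tendsto (fun n : ℕ => 2 * M * (1 - ∏ k : Fin d, ((n - i k : ℕ) : ℝ) / (n : ℝ)))
        atTop (𝓝 (2 * M * (1 - 1))) := (tendsto_const_nhds.sub h2).const_mul _
    rw [sub_self, mul_zero] at h3
    refine h3.congr' ?_
    filter_upwards [eventually_gt_atTop 0] with n hn0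
    have hne : (n : ℝ) ≠ 0 := by positivity
    rw [Finset.prod_div_distrib]
    push_cast
    simp only [Finset.prod_const, Finset.card_univ, Fintype.card_fin]
    have : (n : ℝ) ^ d ≠ 0 := by positivity
    field_simp
  exact squeeze_zero_norm (fun n => by rw [Real.norm_eq_abs]; exact key n) hlim

open Topology in
/-- Ergodic theorem from the existence of a subsequence converging to a continuous function. -/
lemma avgN_tendsto_of_subseq {d : ℕ} {Y : Type*} [TopologicalSpace Y] [CompactSpace Y]
    [TopologicalSpace.MetrizableSpace Y] [MeasurableSpace Y] [BorelSpace Y]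
    (S : (Fin d → ℕ) → Y → Y) (hSc : ∀ j, Continuous (S j))
    (hS : ∀ i j y, S (i + j) y = S i (S j y))
    (F g : Y → ℝ) (hF : Continuous F) (hg : Continuous g) (ns : ℕ → ℕ)
    (hns : Tendsto ns atTop atTop)
    (hlim : ∀ y, Tendsto (fun k => avgN (ns k) (fun j => F (S j y))) atTop (𝓝 (g y))) (y : Y) :
    Tendsto (fun n => avgN n (fun j => F (S j y))) atTop (𝓝 (g y)) := by
  obtain ⟨M, hM⟩ : ∃ M, ∀ y, |F y| ≤ M := by
    obtain ⟨M, hM⟩ := (isCompact_range hF.norm).bddAbove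
    exact ⟨M, fun y => hM ⟨y, rfl⟩⟩
  have hginv : ∀ i, g (S i y) = g y := by
    intro i
    have h1 := hlim (S i y)
    have h2 := ((avgN_shift (fun j => F (S j y)) M (fun j => hM _) i).comp hns).add (hlim y)
    rw [zero_add] at h2
    refine tendsto_nhds_unique h1 (h2.congr fun k => ?_)
    simp only [Function.comp, sub_add_cancel, hS]
  refine tendsto_of_subseq_tendsto fun ps hps => ?_
  obtain ⟨ν, ms, hν, hms, hconv⟩ := exists_subseq_measure (fun j => S j y) ps hps
  refine ⟨ms, ?_⟩
  have hq := hps.comp hms.tendsto_atTop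
  have hinv : ∀ j, ∫ w, F (S j w) ∂ν = ∫ w, F w ∂ν := by
    intro j
    have h1 := hconv (fun w => F (S j w)) (hF.comp (hSc j))
    have h2 := ((avgN_shift (fun j => F (S j y)) M (fun j => hM _) j).comp hq).add (hconv F hF)
    rw [zero_add] at h2
    refine tendsto_nhds_unique h1 (h2.congr fun k => ?_)
    simp only [Function.comp, sub_add_cancel]
    congr 1; funext i
    rw [add_comm, hS]
  have hint : ∀ φ : Y → ℝ, Continuous φ → Integrable φ ν := by
    intro φ hφ
    exact hφ.integrable_of_hasCompactSupport (HasCompactSupport.of_compactSpace _)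
  have hA : ∀ n, 0 < n → ∫ w, avgN n (fun j => F (S j w)) ∂ν = ∫ w, F w ∂ν := by
    intro n hn
    unfold avgN
    rw [integral_div, integral_finsetSum _ (fun j _ => hint (fun a => F (S j a)) (hF.comp (hSc j)))]
    simp only [hinv, Finset.sum_const, nsmul_eq_mul]
    have : ((FboxN d n).card : ℝ) ≠ 0 := by rw [FboxN_card]; positivity
    field_simp
  have hbd : ∀ n (b : (Fin d → ℕ) → ℝ), (∀ j, |b j| ≤ M) → |avgN n b| ≤ M := by
    intro n b hb
    have hM0 : 0 ≤ M := (abs_nonneg _).trans (hb 0)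
    unfold avgN
    rw [abs_div, Nat.abs_cast]
    refine div_le_of_le_mul₀ (by positivity) hM0 ?_
    refine (Finset.abs_sum_le_sum_abs _ _).trans ?_
    refine (Finset.sum_le_card_nsmul _ _ M (fun j _ => hb j)).trans ?_
    rw [nsmul_eq_mul, mul_comm]
  have hAc : ∀ n, Continuous (fun w => avgN n (fun j => F (S j w))) := by
    intro n
    unfold avgN
    exact (continuous_finsetSum _ fun j _ => hF.comp (hSc j)).div_const _
  have hDCT : Tendsto (fun k => ∫ w, avgN (ns k) (fun j => F (S j w)) ∂ν) atTop
      (𝓝 (∫ w, g w ∂ν)) := by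
    refine tendsto_integral_of_dominated_convergence (fun _ => M)
      (fun k => (hint _ (hAc _)).aestronglyMeasurable) (integrable_const _) ?_ ?_
    · intro k
      exact Eventually.of_forall fun w => hbd _ _ (fun j => hM _)
    · exact Eventually.of_forall hlim
  have e1 : ∫ w, g w ∂ν = ∫ w, F w ∂ν := by
    refine tendsto_nhds_unique hDCT (tendsto_const_nhds.congr' ?_)
    filter_upwards [hns.eventually_gt_atTop 0] with k hk
    exact (hA _ hk).symm
  have e2 : ∫ w, g w ∂ν = g y := by
    refine tendsto_nhds_unique (hconv g hg) (tendsto_const_nhds.congr' ?_)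
    filter_upwards [hq.eventually_gt_atTop 0] with k hk
    have hk : 0 < ps (ms k) := hk
    have : ((FboxN d (ps (ms k))).card : ℝ) ≠ 0 := by rw [FboxN_card]; positivity
    simp only [avgN, hginv, Finset.sum_const, nsmul_eq_mul]
    field_simp
  have := hconv F hF
  rwa [← e1, e2] at this

open Topology in
/-- in a uniquely ergodic TDS (given by a continuous `ℕ^d`-action on a
compact metric space), every weakly almost periodic `f ∈ C(X)` (orbit precompact in the
weak topology of the Banach space `C(X)`) is mean equicontinuous. -/
theorem stmt14 {d : ℕ}
    [MetricSpace X] [CompactSpace X] [MeasurableSpace X] [BorelSpace X]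
    (T : (Fin d → ℕ) → X → X)
    (hTc : ∀ j, Continuous (T j))
    (hTadd : ∀ i j, T (i + j) = T i ∘ T j)
    (hue : ∃! μ : Measure X, IsProbabilityMeasure μ ∧ ∀ j, MeasurePreserving (T j) μ μ)
    (f : X → ℂ) (hf : Continuous f)
    (hwap : IsCompact (closure (Set.range fun j : Fin d → ℕ =>
      toWeakSpace ℂ C(X, ℂ) (ContinuousMap.mk (f ∘ T j) (hf.comp (hTc j)))))) :
    ∀ x : X, ∀ ε : ℝ, 0 < ε → ∃ δ : ℝ, 0 < δ ∧
      ∀ y : X, dist x y ≤ δ → dFN T f x y ≤ ε := by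
  intro x ε hε
  set orb : (Fin d → ℕ) → WeakSpace ℂ C(X, ℂ) := fun j =>
    toWeakSpace ℂ C(X, ℂ) (ContinuousMap.mk (f ∘ T j) (hf.comp (hTc j))) with horb
  set K : Set (WeakSpace ℂ C(X, ℂ)) := closure (Set.range orb) with hK
  -- evaluations
  let ev : X → WeakSpace ℂ C(X, ℂ) → ℂ := fun w h => ((toWeakSpace ℂ C(X, ℂ)).symm h) w
  have hevc : ∀ w, Continuous (ev w) := by
    intro w
    exact WeakBilin.eval_continuous (topDualPairing ℂ C(X, ℂ)).flip
      (ContinuousMap.evalCLM ℂ w)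
  have hevorb : ∀ w j, ev w (orb j) = f (T j w) := fun w j => rfl
  have hevx : ∀ h, Continuous (fun w => ev w h) := fun h =>
    ((toWeakSpace ℂ C(X, ℂ)).symm h).continuous
  obtain ⟨C, hC⟩ : ∃ C, ∀ y, ‖f y‖ ≤ C := by
    obtain ⟨M, hM⟩ := (isCompact_range hf.norm).bddAbove
    exact ⟨M, fun y => hM ⟨y, rfl⟩⟩
  have hKbd : ∀ h ∈ K, ∀ w, ‖ev w h‖ ≤ C := by
    intro h hh w
    have hcl : IsClosed {h | ‖ev w h‖ ≤ C} := isClosed_le (hevc w).norm continuous_const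
    refine closure_minimal ?_ hcl hh
    rintro _ ⟨j, rfl⟩
    simp only [Set.mem_ofPred_eq, hevorb]
    exact hC _
  haveI : CompactSpace K := isCompact_iff_compactSpace.1 hwap
  haveI : Nonempty X := ⟨x⟩
  haveI : TopologicalSpace.MetrizableSpace K := by
    let Φ : K → (ℕ → ℂ) := fun h n => ev (TopologicalSpace.denseSeq X n) h
    have hΦ : Continuous Φ := continuous_pi fun n => (hevc _).comp continuous_subtype_val
    have hinj : Function.Injective Φ := by
      intro h₁ h₂ h
      apply Subtype.ext
      apply (toWeakSpace ℂ C(X, ℂ)).symm.injective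
      apply ContinuousMap.coe_injective
      refine Continuous.ext_on (TopologicalSpace.denseRange_denseSeq X)
        (hevx h₁) (hevx h₂) ?_
      rintro _ ⟨n, rfl⟩
      exact congrFun h n
    exact (hΦ.isClosedEmbedding hinj).isEmbedding.metrizableSpace
  letI : MeasurableSpace K := borel K
  haveI : BorelSpace K := ⟨rfl⟩
  obtain ⟨μ, ns, hμ, hns, hconv⟩ := exists_subseq_measure
    (fun j => (⟨orb j, subset_closure ⟨j, rfl⟩⟩ : K)) id tendsto_id
  let G : X × X → K → ℝ := fun p h => ‖ev p.1 h - ev p.2 h‖ ^ 2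
  have hGc : ∀ p, Continuous (G p) := fun p =>
    ((((hevc p.1).comp continuous_subtype_val).sub
      ((hevc p.2).comp continuous_subtype_val)).norm.pow 2)
  have hGp : ∀ h, Continuous (fun p => G p h) := fun h =>
    ((((hevx h).comp continuous_fst).sub ((hevx h).comp continuous_snd)).norm.pow 2)
  let g : X × X → ℝ := fun p => ∫ h, G p h ∂μ
  have hg : Continuous g := by
    refine continuous_of_dominated (bound := fun _ => (2 * C) ^ 2) ?_ ?_ (integrable_const _) ?_
    · intro p
      exact ((hGc p).integrable_of_hasCompactSupport
        (HasCompactSupport.of_compactSpace _)).aestronglyMeasurable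
    · intro p
      refine Eventually.of_forall fun h => ?_
      have h1 := hKbd h h.2 p.1
      have h2 := hKbd h h.2 p.2
      have h3 := norm_sub_le (ev p.1 h) (ev p.2 h)
      simp only [G, norm_pow, norm_norm]
      gcongr
      linarith
    · exact Eventually.of_forall hGp
  have hmain : ∀ p : X × X, Tendsto (fun n => avgN n (fun j => ‖f (T j p.1) - f (T j p.2)‖ ^ 2))
      atTop (𝓝 (g p)) := by
    refine avgN_tendsto_of_subseq (fun j (p : X × X) => (T j p.1, T j p.2))
      (fun j => ((hTc j).comp continuous_fst).prodMk ((hTc j).comp continuous_snd))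
      (fun i j p => by simp [hTadd]) (fun p => ‖f p.1 - f p.2‖ ^ 2) g
      (((hf.comp continuous_fst).sub (hf.comp continuous_snd)).norm.pow 2) hg ns
      hns.tendsto_atTop ?_
    intro p
    exact hconv (G p) (hGc p)
  have hgx : g (x, x) = 0 := by simp [g, G]
  have hgx' : Continuous fun y => g (x, y) := hg.comp (by fun_prop)
  obtain ⟨δ, hδ, hδ'⟩ := Metric.continuous_iff.1 hgx' x (ε ^ 2) (by positivity)
  refine ⟨δ / 2, by positivity, fun y hy => ?_⟩
  have h1 := hδ' y (by rw [dist_comm]; linarith)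
  rw [hgx, dist_zero_right, Real.norm_eq_abs] at h1
  have h2 : dFN T f x y = √(g (x, y)) :=
    ((Real.continuous_sqrt.tendsto _).comp (hmain (x, y))).limsup_eq
  rw [h2]
  exact Real.sqrt_le_iff.2 ⟨hε.le, (le_abs_self _).trans h1.le⟩
end
end
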